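/- Let 5 ≤ n ≤ 12 and let P be a finite-volume non-compact right-angled convex hyperbolic n-polyhedron. Then the number of ideal vertices of P satisfies v_∞(P) ≥ vₙ, where (v₅, v₆, v₇, v₈, v₉, v₁₀, v₁₁, v₁₂) = (2, 6, 23, 135, 1704, 182044, 1674504428, 127466960740760088). -/

import Mathlib

open scoped BigOperators

noncomputable section

/-- The Minkowski bilinear form `⟨x,y⟩ = -x₀y₀ + x₁y₁ + ⋯ + xₙyₙ` on `ℝ^{n+1}`. -/
def mink {n : ℕ} (x y : Fin (n + 1) → ℝ) : ℝ :=
  -(x 0 * y 0) + ∑ i : Fin n, x i.succ * y i.succ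

/-- The hyperboloid model of the hyperbolic space `ℍⁿ`. -/
def Hyperboloid (n : ℕ) : Set (Fin (n + 1) → ℝ) :=
  {x | mink x x = -1 ∧ 0 < x 0}

/-- The Klein projection `x ↦ (x₁/x₀, …, xₙ/x₀)` of the hyperboloid onto the unit ball. -/
def kleinMap {n : ℕ} (x : Fin (n + 1) → ℝ) : EuclideanSpace ℝ (Fin n) :=
  WithLp.toLp 2 fun i => x i.succ / x 0

/-- Dimension of a subset of a real vector space: the rank of its vector span. -/
def sdim {n : ℕ} (s : Set (EuclideanSpace ℝ (Fin n))) : ℕ :=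
  Module.finrank ℝ (vectorSpan ℝ s)

/-- A convex hyperbolic `n`-polyhedron: a finite intersection of hyperbolic half-spaces
`H_{eᵢ}⁻ = {x : ⟨eᵢ,x⟩ ≤ 0}` (with `⟨eᵢ,eᵢ⟩ = 1`) having nonempty interior
(equivalently, its Klein-model image has nonempty interior in `ℝⁿ`). -/
structure HypPolyhedron (n : ℕ) where
  m : ℕ
  e : Fin m → (Fin (n + 1) → ℝ)
  unit : ∀ i, mink (e i) (e i) = 1
  nonempty_int :
    (interior (kleinMap '' {x ∈ Hyperboloid n | ∀ i, mink (e i) x ≤ 0})).Nonempty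

namespace HypPolyhedron

variable {n : ℕ} (P : HypPolyhedron n)

/-- The set of points of the polyhedron in the hyperboloid model. -/
def carrier : Set (Fin (n + 1) → ℝ) :=
  {x ∈ Hyperboloid n | ∀ i, mink (P.e i) x ≤ 0}

/-- `P̄`: the closure of the Klein-model image of the polyhedron in the closed unit ball. -/
def cl : Set (EuclideanSpace ℝ (Fin n)) :=
  closure (kleinMap '' P.carrier)

/-- The `k`-faces of `P`: the `k`-dimensional (nonempty) exposed faces of `P̄`. -/
def faces (k : ℕ) : Set (Set (EuclideanSpace ℝ (Fin n))) :=
  {F | IsExposed ℝ P.cl F ∧ F.Nonempty ∧ sdim F = k}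

/-- `a_k(P)`: the number of `k`-faces of `P`. -/
def a (k : ℕ) : ℕ := (P.faces k).ncard

/-- Vertices of `P`: the points of `0`-dimensional exposed faces of `P̄`. -/
def verts : Set (EuclideanSpace ℝ (Fin n)) :=
  {v | IsExposed ℝ P.cl {v}}

/-- Ideal vertices: vertices lying on the unit sphere. -/
def idealVerts : Set (EuclideanSpace ℝ (Fin n)) :=
  {v ∈ P.verts | ‖v‖ = 1}

/-- Finite vertices: vertices lying in the open unit ball. -/
def finiteVerts : Set (EuclideanSpace ℝ (Fin n)) :=
  {v ∈ P.verts | ‖v‖ < 1}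

/-- `v_∞(P)`: the number of ideal vertices of `P`. -/
def vInf : ℕ := P.idealVerts.ncard

/-- The bounding hyperplane `H_e` contains the face `F`. -/
def faceInHyperplane (e : Fin (n + 1) → ℝ) (F : Set (EuclideanSpace ℝ (Fin n))) : Prop :=
  ∀ x ∈ P.carrier, kleinMap x ∈ F → mink e x = 0

/-- `P` is right-angled: whenever two distinct bounding hyperplanes both contain an
`(n-2)`-dimensional face of `P`, the corresponding unit normals are orthogonal,
i.e. the dihedral angle is `π/2`. -/
def IsRightAngled : Prop :=
  ∀ i j : Fin P.m, i ≠ j →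
    (∃ F ∈ P.faces (n - 2), P.faceInHyperplane (P.e i) F ∧ P.faceInHyperplane (P.e j) F) →
    mink (P.e i) (P.e j) = 0

/-- `P` has finite volume: `P̄` is the convex hull of its (finitely many) vertices. -/
def FiniteVolume : Prop :=
  P.verts.Finite ∧ P.cl = convexHull ℝ P.verts

/-- `P` is compact: finite volume and all vertices are finite. -/
def IsCompactPoly : Prop :=
  P.FiniteVolume ∧ ∀ v ∈ P.verts, ‖v‖ < 1

/-- `P` is ideal: finite volume and all vertices are ideal. -/
def IsIdeal : Prop :=
  P.FiniteVolume ∧ ∀ v ∈ P.verts, ‖v‖ = 1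

end HypPolyhedron

/-- `ν(P) = a_{n-1}(P) + v_∞(P)` ranging over the family `𝒫ⁿ` of finite-volume non-compact
right-angled convex hyperbolic `n`-polyhedra. -/
def nuSet (n : ℕ) : Set ℕ :=
  {m | ∃ P : HypPolyhedron n,
        P.FiniteVolume ∧ P.IsRightAngled ∧ ¬ P.IsCompactPoly ∧ P.a (n - 1) + P.vInf = m}

/-- `νₙ = sInf {ν(P) : P ∈ 𝒫ⁿ}` (with `sInf ∅ = 0`). -/
def nu (n : ℕ) : ℕ := sInf (nuSet n)

/-- The table of lower bounds `vₙ` for the number of ideal vertices. -/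
def idealVertexBound : ℕ → ℕ
  | 5 => 2
  | 6 => 6
  | 7 => 23
  | 8 => 135
  | 9 => 1704
  | 10 => 182044
  | 11 => 1674504428
  | 12 => 127466960740760088
  | _ => 0

section Minkowski

variable {n : ℕ}

lemma mink_comm (x y : Fin (n + 1) → ℝ) : mink x y = mink y x := by
  simp [mink, mul_comm]

lemma mink_add_right (x y z : Fin (n + 1) → ℝ) : mink x (y + z) = mink x y + mink x z := by
  simp only [mink, Pi.add_apply, mul_add, Finset.sum_add_distrib]
  ring

lemma mink_smul_right (c : ℝ) (x y : Fin (n + 1) → ℝ) : mink x (c • y) = c * mink x y := by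
  simp only [mink, Pi.smul_apply, smul_eq_mul, mul_add, Finset.mul_sum]
  congr 1
  · ring
  · exact Finset.sum_congr rfl fun i _ => by ring

lemma mink_sub_right (x y z : Fin (n + 1) → ℝ) : mink x (y - z) = mink x y - mink x z := by
  simp only [mink, Pi.sub_apply, mul_sub, Finset.sum_sub_distrib]
  ring

lemma mink_add_left (x y z : Fin (n + 1) → ℝ) : mink (x + y) z = mink x z + mink y z := by
  rw [mink_comm, mink_add_right, mink_comm z, mink_comm z]

lemma mink_sub_left (x y z : Fin (n + 1) → ℝ) : mink (x - y) z = mink x z - mink y z := by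
  rw [mink_comm, mink_sub_right, mink_comm z, mink_comm z]

lemma mink_smul_left (c : ℝ) (x y : Fin (n + 1) → ℝ) : mink (c • x) y = c * mink x y := by
  rw [mink_comm, mink_smul_right, mink_comm]

/-- The Minkowski form with the left argument fixed, as a linear functional. -/
def minkLin (x : Fin (n + 1) → ℝ) : (Fin (n + 1) → ℝ) →ₗ[ℝ] ℝ where
  toFun y := mink x y
  map_add' := mink_add_right x
  map_smul' c y := mink_smul_right c x y

@[simp] lemma minkLin_apply (x y : Fin (n + 1) → ℝ) : minkLin x y = mink x y := rfl

lemma mink_sum_right {ι : Type*} (s : Finset ι) (x : Fin (n + 1) → ℝ)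
    (f : ι → Fin (n + 1) → ℝ) : mink x (∑ i ∈ s, f i) = ∑ i ∈ s, mink x (f i) :=
  map_sum (minkLin x) f s

lemma mink_zero_right (x : Fin (n + 1) → ℝ) : mink x 0 = 0 :=
  map_zero (minkLin x)

lemma mink_self_of_zero {x : Fin (n + 1) → ℝ} (hx : x 0 = 0) :
    mink x x = ∑ i : Fin n, x i.succ ^ 2 := by
  simp [mink, hx, sq]

lemma mink_self_nonneg_of_zero {x : Fin (n + 1) → ℝ} (hx : x 0 = 0) : 0 ≤ mink x x := by
  rw [mink_self_of_zero hx]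
  positivity

lemma eq_zero_of_mink_self_nonpos {x : Fin (n + 1) → ℝ} (hx : x 0 = 0) (h : mink x x ≤ 0) :
    x = 0 := by
  rw [mink_self_of_zero hx] at h
  have h' := (Finset.sum_eq_zero_iff_of_nonneg (fun i _ => sq_nonneg (x (Fin.succ i)))).1
    (le_antisymm h (Finset.sum_nonneg fun i _ => sq_nonneg _))
  funext i
  refine Fin.cases hx (fun j => ?_) i
  simpa using h' j (Finset.mem_univ j)

/-- A causal vector orthogonal to a causal vector `v` is a multiple of `v`. -/
lemma eq_smul_of_orthogonal {v w : Fin (n + 1) → ℝ} (hv : mink v v ≤ 0)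
    (hv0 : 0 < v 0) (hvw : mink v w = 0) (hw : mink w w ≤ 0) : w = (w 0 / v 0) • v := by
  set k := w 0 / v 0
  have hu : (w - k • v) 0 = 0 := by simp [k, hv0.ne']
  have h : mink (w - k • v) (w - k • v) ≤ 0 := by
    simp only [mink_sub_left, mink_sub_right, mink_smul_left, mink_smul_right, hvw,
      mink_comm w v]
    nlinarith [sq_nonneg k]
  exact sub_eq_zero.1 (eq_zero_of_mink_self_nonpos hu h)

lemma eq_zero_of_orthogonal_timelike {v w : Fin (n + 1) → ℝ} (hv : mink v v < 0)
    (hv0 : 0 < v 0) (hvw : mink v w = 0) (hw : mink w w ≤ 0) : w = 0 := by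
  have h := eq_smul_of_orthogonal hv.le hv0 hvw hw
  rw [h, mink_smul_right] at hvw
  rcases mul_eq_zero.1 hvw with h0 | h0
  · rw [h, h0, zero_smul]
  · exact absurd h0 hv.ne

/-- A forward timelike and a forward causal vector have negative product. -/
lemma mink_neg_of_forward {x v : Fin (n + 1) → ℝ} (hx : mink x x < 0) (hx0 : 0 < x 0)
    (hv : mink v v ≤ 0) (hv0 : 0 < v 0) : mink v x < 0 := by
  by_contra! hcon
  set k := v 0 / x 0
  have hk : 0 < k := div_pos hv0 hx0
  have hu : (v - k • x) 0 = 0 := by simp [k, hx0.ne']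
  have h := mink_self_nonneg_of_zero hu
  simp only [mink_sub_left, mink_sub_right, mink_smul_left, mink_smul_right,
    mink_comm x v] at h
  nlinarith [mul_pos hk hk, mul_nonneg hk.le hcon]

end Minkowski

/-- Strict inequalities in finite number survive a small perturbation. -/
lemma exists_pos_perturbation {ι : Type*} [Finite ι] (a b : ι → ℝ) :
    ∃ ε > 0, ∀ i, a i < 0 → a i + ε * b i < 0 ∧ a i - ε * b i < 0 := by
  have h : ∀ i, ∀ᶠ ε in nhdsWithin (0 : ℝ) (Set.Ioi 0),
      a i < 0 → a i + ε * b i < 0 ∧ a i - ε * b i < 0 := by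
    intro i
    by_cases hi : a i < 0
    · have h1 : Filter.Tendsto (fun ε : ℝ => a i + ε * b i) (nhds 0) (nhds (a i)) := by
        have : Continuous fun ε : ℝ => a i + ε * b i := by fun_prop
        simpa using this.tendsto 0
      have h2 : Filter.Tendsto (fun ε : ℝ => a i - ε * b i) (nhds 0) (nhds (a i)) := by
        have : Continuous fun ε : ℝ => a i - ε * b i := by fun_prop
        simpa using this.tendsto 0
      filter_upwards [nhdsWithin_le_nhds (h1.eventually_lt_const hi),
        nhdsWithin_le_nhds (h2.eventually_lt_const hi)] with ε e1 e2 _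
      exact ⟨e1, e2⟩
    · exact Filter.Eventually.of_forall fun ε h => absurd h hi
  obtain ⟨ε, hε, hpos⟩ := ((Filter.eventually_all.2 h).and self_mem_nhdsWithin).exists
  exact ⟨ε, hpos, hε⟩

/-- A cone in Minkowski space cut out by unit spacelike vectors that are pairwise orthogonal or
have product at most `-1`, having an interior timelike point and contained in the closed forward
light cone: the cone over a right-angled polyhedron of finite volume. -/
structure RightAngledCone (n : ℕ) (ι : Type) where
  e : ι → Fin (n + 1) → ℝ
  unit : ∀ i, mink (e i) (e i) = 1
  gram : ∀ i j, i ≠ j → mink (e i) (e j) = 0 ∨ mink (e i) (e j) ≤ -1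
  pt : Fin (n + 1) → ℝ
  pt_timelike : mink pt pt < 0
  pt_neg : ∀ i, mink (e i) pt < 0
  causal : ∀ x, (∀ i, mink (e i) x ≤ 0) → mink x x ≤ 0 ∧ 0 ≤ x 0

namespace RightAngledCone

variable {n : ℕ} {ι : Type} (D : RightAngledCone n ι)

/-- The points of the cone. -/
def cone : Set (Fin (n + 1) → ℝ) := {x | ∀ i, mink (D.e i) x ≤ 0}

/-- The slice of the cone at height one. -/
def slice : Set (Fin (n + 1) → ℝ) := {x | x ∈ D.cone ∧ x 0 = 1}

/-- The vertices of the polyhedron, as points at height one. -/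
def verts : Set (Fin (n + 1) → ℝ) := D.slice.extremePoints ℝ

/-- A set of pairwise orthogonal walls. -/
def IsClique (S : Finset ι) : Prop :=
  ∀ i ∈ S, ∀ j ∈ S, i ≠ j → mink (D.e i) (D.e j) = 0

/-- The part of the cone lying on the walls in `S`. -/
def faceCone (S : Finset ι) : Set (Fin (n + 1) → ℝ) :=
  {x | x ∈ D.cone ∧ ∀ s ∈ S, mink (D.e s) x = 0}

lemma gram_nonpos {i j : ι} (hij : i ≠ j) : mink (D.e i) (D.e j) ≤ 0 := by
  rcases D.gram i j hij with h | h <;> linarith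

lemma pos_of_mem_cone {x : Fin (n + 1) → ℝ} (hx : x ∈ D.cone) (h : x ≠ 0) : 0 < x 0 := by
  obtain ⟨h1, h2⟩ := D.causal x hx
  exact lt_of_le_of_ne h2 fun h0 => h (eq_zero_of_mink_self_nonpos h0.symm h1)

lemma pt_mem_cone : D.pt ∈ D.cone := fun i => (D.pt_neg i).le

lemma ne_zero_of_timelike {x : Fin (n + 1) → ℝ} (hx : mink x x < 0) : x ≠ 0 := by
  rintro rfl
  simp [mink_zero_right] at hx

lemma pt_pos : 0 < D.pt 0 :=
  D.pos_of_mem_cone D.pt_mem_cone (ne_zero_of_timelike D.pt_timelike)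

lemma mink_pt_neg {x : Fin (n + 1) → ℝ} (hx : x ∈ D.cone) (h : x ≠ 0) : mink x D.pt < 0 :=
  mink_neg_of_forward D.pt_timelike D.pt_pos (D.causal x hx).1 (D.pos_of_mem_cone hx h)

lemma smul_mem_cone {x : Fin (n + 1) → ℝ} (hx : x ∈ D.cone) {c : ℝ} (hc : 0 ≤ c) :
    c • x ∈ D.cone := fun i => by
  rw [mink_smul_right]
  exact mul_nonpos_of_nonneg_of_nonpos hc (hx i)

lemma normalize_mem_slice {x : Fin (n + 1) → ℝ} (hx : x ∈ D.cone) (h : x ≠ 0) :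
    (x 0)⁻¹ • x ∈ D.slice := by
  have := D.pos_of_mem_cone hx h
  exact ⟨D.smul_mem_cone hx (inv_nonneg.2 this.le), by simp [this.ne']⟩

lemma verts_subset_slice : D.verts ⊆ D.slice := extremePoints_subset

lemma mem_cone_of_verts {v : Fin (n + 1) → ℝ} (hv : v ∈ D.verts) : v ∈ D.cone :=
  (D.verts_subset_slice hv).1

lemma apply_zero_of_verts {v : Fin (n + 1) → ℝ} (hv : v ∈ D.verts) : v 0 = 1 :=
  (D.verts_subset_slice hv).2

lemma ne_zero_of_verts {v : Fin (n + 1) → ℝ} (hv : v ∈ D.verts) : v ≠ 0 := by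
  rintro rfl
  simpa using D.apply_zero_of_verts hv

lemma IsClique.subset {S R : Finset ι} (hS : D.IsClique S) (h : R ⊆ S) : D.IsClique R :=
  fun i hi j hj => hS i (h hi) j (h hj)

lemma mink_sum_clique {S : Finset ι} (hS : D.IsClique S) {i : ι} (hi : i ∈ S) (c : ι → ℝ) :
    mink (D.e i) (∑ s ∈ S, c s • D.e s) = c i := by
  classical
  rw [mink_sum_right, Finset.sum_eq_single i]
  · rw [mink_smul_right, D.unit, mul_one]
  · intro j hj hji
    rw [mink_smul_right, hS i hi j hj hji.symm, mul_zero]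
  · exact fun h => absurd hi h

/-- The orthogonal projection of the interior point to the face of a clique. -/
def proj (S : Finset ι) : Fin (n + 1) → ℝ := D.pt - ∑ s ∈ S, mink (D.e s) D.pt • D.e s

lemma mink_proj_of_mem {S : Finset ι} (hS : D.IsClique S) {i : ι} (hi : i ∈ S) :
    mink (D.e i) (D.proj S) = 0 := by
  rw [proj, mink_sub_right, D.mink_sum_clique hS hi fun s => mink (D.e s) D.pt, sub_self]

lemma mink_proj_neg (S : Finset ι) {i : ι} (hi : i ∉ S) : mink (D.e i) (D.proj S) < 0 := by
  rw [proj, mink_sub_right, mink_sum_right]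
  have h : 0 ≤ ∑ s ∈ S, mink (D.e i) (mink (D.e s) D.pt • D.e s) := by
    refine Finset.sum_nonneg fun s hs => ?_
    rw [mink_smul_right]
    exact mul_nonneg_of_nonpos_of_nonpos (D.pt_neg s).le
      (D.gram_nonpos fun h => hi (h ▸ hs))
  linarith [D.pt_neg i]

lemma proj_mem_cone {S : Finset ι} (hS : D.IsClique S) : D.proj S ∈ D.cone := by
  intro i
  by_cases hi : i ∈ S
  · exact (D.mink_proj_of_mem hS hi).le
  · exact (D.mink_proj_neg S hi).le

lemma proj_timelike {S : Finset ι} (hS : D.IsClique S) : mink (D.proj S) (D.proj S) < 0 := by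
  have h : ∀ y, mink (D.proj S) y = mink D.pt y
      - ∑ s ∈ S, mink (D.e s) D.pt * mink (D.e s) y := by
    intro y
    rw [proj, mink_sub_left, mink_comm (∑ s ∈ S, _) y, mink_sum_right]
    congr 1
    exact Finset.sum_congr rfl fun s _ => by rw [mink_smul_right, mink_comm y]
  rw [h, Finset.sum_eq_zero fun s hs => by rw [D.mink_proj_of_mem hS hs, mul_zero], sub_zero,
    mink_comm, h]
  have : 0 ≤ ∑ s ∈ S, mink (D.e s) D.pt * mink (D.e s) D.pt :=
    Finset.sum_nonneg fun s _ => mul_self_nonneg _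
  linarith [D.pt_timelike]

lemma proj_ne_zero {S : Finset ι} (hS : D.IsClique S) : D.proj S ≠ 0 :=
  ne_zero_of_timelike (D.proj_timelike hS)

lemma proj_pos {S : Finset ι} (hS : D.IsClique S) : 0 < D.proj S 0 :=
  D.pos_of_mem_cone (D.proj_mem_cone hS) (D.proj_ne_zero hS)

lemma mink_proj_vert_neg {S : Finset ι} (hS : D.IsClique S) {v : Fin (n + 1) → ℝ}
    (hv : v ∈ D.verts) : mink v (D.proj S) < 0 :=
  mink_neg_of_forward (D.proj_timelike hS) (D.proj_pos hS)
    (D.causal v (D.mem_cone_of_verts hv)).1 (by rw [D.apply_zero_of_verts hv]; exact one_pos)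

lemma proj_mem_faceCone {S : Finset ι} (hS : D.IsClique S) : D.proj S ∈ D.faceCone S :=
  ⟨D.proj_mem_cone hS, fun _ hs => D.mink_proj_of_mem hS hs⟩

lemma faceCone_anti {S R : Finset ι} (h : S ⊆ R) : D.faceCone R ⊆ D.faceCone S :=
  fun _ hx => ⟨hx.1, fun s hs => hx.2 s (h hs)⟩

section Compactness

lemma isCompact_slice : IsCompact D.slice := by
  have hclosed : IsClosed D.slice := by
    have h1 : IsClosed D.cone := by
      have : D.cone = ⋂ i, {x | minkLin (D.e i) x ≤ 0} := by
        ext x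
        simp [cone]
      rw [this]
      exact isClosed_iInter fun i => isClosed_le
        (LinearMap.continuous_of_finiteDimensional _) continuous_const
    exact h1.inter (isClosed_eq (continuous_apply 0) continuous_const)
  refine IsCompact.of_isClosed_subset (isCompact_Icc (a := fun _ => -1) (b := fun _ => 1))
    hclosed fun x hx => ?_
  have h1 := (D.causal x hx.1).1
  have hs : ∑ i : Fin n, x i.succ ^ 2 ≤ 1 := by
    simp only [mink, hx.2, ← sq] at h1
    linarith
  have hi : ∀ i, -1 ≤ x i ∧ x i ≤ 1 := by
    intro i
    refine Fin.cases ?_ (fun j => ?_) i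
    · rw [hx.2]
      norm_num
    · rw [← abs_le, ← sq_le_one_iff_abs_le_one]
      exact (Finset.single_le_sum (f := fun i : Fin n => x i.succ ^ 2)
        (fun i _ => sq_nonneg _) (Finset.mem_univ j)).trans hs
  exact ⟨fun i => (hi i).1, fun i => (hi i).2⟩

/-- A linear functional is maximized on a face at a vertex. -/
lemma exists_vert_max {S : Finset ι} (hS : D.IsClique S)
    (l : (Fin (n + 1) → ℝ) →ₗ[ℝ] ℝ) :
    ∃ v ∈ D.verts, (∀ s ∈ S, mink (D.e s) v = 0) ∧ ∀ x ∈ D.faceCone S, l x ≤ x 0 * l v := by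
  set A : Set (Fin (n + 1) → ℝ) := {x | x ∈ D.slice ∧ ∀ s ∈ S, mink (D.e s) x = 0}
  have hAext : IsExtreme ℝ D.slice A := by
    refine ⟨fun x hx => hx.1, fun x hx y hy z hz hzs => ⟨hx, fun s hs => ?_⟩⟩
    obtain ⟨a, b, ha, hb, -, rfl⟩ := hzs
    have h := hz.2 s hs
    rw [mink_add_right, mink_smul_right, mink_smul_right] at h
    have h1 := mul_nonpos_of_nonneg_of_nonpos ha.le (hx.1 s)
    have h2 := mul_nonpos_of_nonneg_of_nonpos hb.le (hy.1 s)
    have h3 : a * mink (D.e s) x = 0 := by linarith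
    exact (mul_eq_zero.1 h3).resolve_left ha.ne'
  have hA : IsCompact A := by
    have : A = D.slice ∩ ⋂ s ∈ S, {x | minkLin (D.e s) x = 0} := by
      ext x
      simp [A]
    rw [this]
    exact D.isCompact_slice.inter_right (isClosed_biInter fun s _ => isClosed_eq
      (LinearMap.continuous_of_finiteDimensional _) continuous_const)
  have hAne : A.Nonempty := by
    refine ⟨(D.proj S 0)⁻¹ • D.proj S, D.normalize_mem_slice (D.proj_mem_cone hS)
      (D.proj_ne_zero hS), fun s hs => ?_⟩
    rw [mink_smul_right, D.mink_proj_of_mem hS hs, mul_zero]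
  let lc : StrongDual ℝ (Fin (n + 1) → ℝ) := LinearMap.toContinuousLinearMap l
  have hBexp : IsExposed ℝ A (lc.toExposed A) := ContinuousLinearMap.toExposed.isExposed
  have hBne : (lc.toExposed A).Nonempty := by
    obtain ⟨x, hx, hmax⟩ := hA.exists_isMaxOn hAne lc.continuous.continuousOn
    exact ⟨x, hx, fun y hy => hmax hy⟩
  obtain ⟨v, hv⟩ := (hBexp.isCompact hA).extremePoints_nonempty hBne
  have hvB : v ∈ lc.toExposed A := hv.1
  refine ⟨v, (hAext.trans hBexp.isExtreme).extremePoints_subset_extremePoints hv,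
    hvB.1.2, fun x hx => ?_⟩
  by_cases h0 : x = 0
  · simp [h0]
  have hpos := D.pos_of_mem_cone hx.1 h0
  have h := hvB.2 ((x 0)⁻¹ • x) ⟨D.normalize_mem_slice hx.1 h0, fun s hs => by
    rw [mink_smul_right, hx.2 s hs, mul_zero]⟩
  have h' : (x 0)⁻¹ * l x ≤ l v := by simpa [lc] using h
  rwa [inv_mul_le_iff₀ hpos] at h'

end Compactness

section Tight

variable [Fintype ι]

/-- A vertex is determined up to scaling by the walls through it. -/
lemma eq_smul_of_tight {v : Fin (n + 1) → ℝ} (hv : v ∈ D.verts) {y : Fin (n + 1) → ℝ}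
    (hy : ∀ i, mink (D.e i) v = 0 → mink (D.e i) y = 0) : y = y 0 • v := by
  have hv0 := D.apply_zero_of_verts hv
  set w := y - y 0 • v with hw
  have hw0 : w 0 = 0 := by simp [hw, hv0]
  have hwt : ∀ i, mink (D.e i) v = 0 → mink (D.e i) w = 0 := by
    intro i hi
    rw [hw, mink_sub_right, mink_smul_right, hi, hy i hi]
    ring
  obtain ⟨ε, hε, h⟩ := exists_pos_perturbation (fun i => mink (D.e i) v)
    (fun i => mink (D.e i) w)
  have hmem : v + ε • w ∈ D.slice ∧ v - ε • w ∈ D.slice := by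
    refine ⟨⟨fun i => ?_, by simp [hv0, hw0]⟩, ⟨fun i => ?_, by simp [hv0, hw0]⟩⟩
    all_goals
      simp only [mink_add_right, mink_sub_right, mink_smul_right]
      rcases (D.mem_cone_of_verts hv i).lt_or_eq with hi | hi
      · first
        | exact (h i hi).1.le
        | exact (h i hi).2.le
      · simp [hi, hwt i hi]
  have hseg : v ∈ openSegment ℝ (v + ε • w) (v - ε • w) := by
    refine ⟨1 / 2, 1 / 2, by norm_num, by norm_num, by norm_num, ?_⟩
    ext i
    simp only [Pi.add_apply, Pi.smul_apply, Pi.sub_apply, smul_eq_mul]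
    ring
  have h1 := hv.2 hmem.1 hmem.2 hseg
  have h2 : ε • w = 0 := by simpa using h1
  have h3 := (smul_eq_zero.1 h2).resolve_left hε.ne'
  exact sub_eq_zero.1 h3

/-- The walls through a point. -/
def tight (x : Fin (n + 1) → ℝ) : Finset ι :=
  open Classical in Finset.univ.filter fun i => mink (D.e i) x = 0

@[simp] lemma mem_tight {x : Fin (n + 1) → ℝ} {i : ι} : i ∈ D.tight x ↔ mink (D.e i) x = 0 := by
  simp [tight]

lemma eq_of_tight_subset {v w : Fin (n + 1) → ℝ} (hv : v ∈ D.verts) (hw : w ∈ D.verts)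
    (h : D.tight v ⊆ D.tight w) : w = v := by
  have := D.eq_smul_of_tight hv (y := w) fun i hi => by
    simpa using h (D.mem_tight.2 hi)
  rwa [D.apply_zero_of_verts hw, one_smul] at this

lemma finite_verts : D.verts.Finite :=
  Set.Finite.of_injOn (f := D.tight) (t := Set.univ) (fun _ _ => Set.mem_univ _)
    (fun _ hv _ hw h => (D.eq_of_tight_subset hw hv h.ge)) Set.finite_univ

lemma mink_neg_of_notMem_tight {v : Fin (n + 1) → ℝ} (hv : v ∈ D.cone) {i : ι}
    (hi : i ∉ D.tight v) : mink (D.e i) v < 0 :=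
  lt_of_le_of_ne (hv i) fun h => hi (D.mem_tight.2 h)

end Tight

end RightAngledCone

namespace RightAngledCone

variable {n : ℕ} {ι : Type} (D : RightAngledCone n ι)

lemma mink_eq_zero_comm {i j : ι} : mink (D.e i) (D.e j) = 0 ↔ mink (D.e j) (D.e i) = 0 := by
  rw [mink_comm]

lemma add_ne_zero_of_walls (i j : ι) : D.e i + D.e j ≠ 0 := by
  intro h
  have h1 : mink (D.e i + D.e j) D.pt = 0 := by
    rw [h, mink_comm, mink_zero_right]
  rw [mink_add_left] at h1
  linarith [D.pt_neg i, D.pt_neg j]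

lemma mink_add_self_nonpos {i j : ι} (hij : i ≠ j) (h : mink (D.e i) (D.e j) ≠ 0) :
    mink (D.e i + D.e j) (D.e i + D.e j) ≤ 0 := by
  have := (D.gram i j hij).resolve_left h
  rw [mink_add_left, mink_add_right, mink_add_right, D.unit, D.unit, mink_comm (D.e j)]
  linarith

lemma mink_walls_ne_one (i j : ι) (hij : i ≠ j) : mink (D.e i) (D.e j) ≠ 1 := fun h => by
  linarith [D.gram_nonpos hij]

variable [Fintype ι]

/-- The walls orthogonal to all walls in `S`. -/
def link (S : Finset ι) : Finset ι :=
  open Classical in Finset.univ.filter fun k => ∀ s ∈ S, mink (D.e k) (D.e s) = 0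

@[simp] lemma mem_link {S : Finset ι} {k : ι} :
    k ∈ D.link S ↔ ∀ s ∈ S, mink (D.e k) (D.e s) = 0 := by
  simp [link]

lemma notMem_of_mem_link {S : Finset ι} {k : ι} (hk : k ∈ D.link S) : k ∉ S := fun h => by
  have := D.mem_link.1 hk k h
  rw [D.unit] at this
  exact one_ne_zero this

lemma mem_link_of_isClique {S M : Finset ι} (hM : D.IsClique M) (hSM : S ⊆ M) {k : ι}
    (hk : k ∈ M) (hkS : k ∉ S) : k ∈ D.link S :=
  D.mem_link.2 fun s hs => hM k hk s (hSM hs) fun h => hkS (h ▸ hs)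

lemma isClique_insert [DecidableEq ι] {S : Finset ι} (hS : D.IsClique S) {k : ι}
    (hk : k ∈ D.link S) : D.IsClique (insert k S) := by
  intro i hi j hj hij
  rw [Finset.mem_insert] at hi hj
  rcases hi with rfl | hi <;> rcases hj with rfl | hj
  · exact absurd rfl hij
  · exact D.mem_link.1 hk j hj
  · exact D.mink_eq_zero_comm.1 (D.mem_link.1 hk i hi)
  · exact hS i hi j hj hij

section Finite

variable {D} {v : Fin (n + 1) → ℝ}

lemma isClique_tight (hv : v ∈ D.verts) (hf : mink v v < 0) : D.IsClique (D.tight v) := by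
  intro i hi j hj hij
  by_contra h
  refine D.add_ne_zero_of_walls i j (eq_zero_of_orthogonal_timelike hf
    (by rw [D.apply_zero_of_verts hv]; exact one_pos) ?_ (D.mink_add_self_nonpos hij h))
  rw [mink_comm, mink_add_left, D.mem_tight.1 hi, D.mem_tight.1 hj, add_zero]

/-- The coordinates of a vector with respect to a finite vertex. -/
lemma exists_decomposition_finite (hv : v ∈ D.verts) (hf : mink v v < 0)
    (x : Fin (n + 1) → ℝ) :
    ∃ a : ℝ, x = a • v + ∑ t ∈ D.tight v, mink (D.e t) x • D.e t := by
  have hT := isClique_tight hv hf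
  refine ⟨_, eq_add_of_sub_eq (D.eq_smul_of_tight hv
    (y := x - ∑ t ∈ D.tight v, mink (D.e t) x • D.e t) fun i hi => ?_)⟩
  rw [mink_sub_right, D.mink_sum_clique hT (D.mem_tight.2 hi) fun t => mink (D.e t) x, sub_self]

lemma card_tight_finite (hv : v ∈ D.verts) (hf : mink v v < 0) : (D.tight v).card = n := by
  classical
  have hT := isClique_tight hv hf
  let φ : (Fin (n + 1) → ℝ) →ₗ[ℝ] (D.tight v → ℝ) := LinearMap.pi fun t => minkLin (D.e t)
  have hsurj : Function.Surjective φ := by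
    intro c
    refine ⟨∑ t ∈ D.tight v, (if h : t ∈ D.tight v then c ⟨t, h⟩ else 0) • D.e t, ?_⟩
    ext ⟨t, ht⟩
    change mink (D.e t) _ = _
    rw [D.mink_sum_clique hT ht fun t => if h : t ∈ D.tight v then c ⟨t, h⟩ else 0, dif_pos ht]
  have hker : LinearMap.ker φ = Submodule.span ℝ {v} := by
    ext y
    rw [Submodule.mem_span_singleton, LinearMap.mem_ker]
    constructor
    · intro h
      exact ⟨y 0, (D.eq_smul_of_tight hv fun i hi =>
        congrFun h ⟨i, D.mem_tight.2 hi⟩).symm⟩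
    · rintro ⟨a, rfl⟩
      ext ⟨t, ht⟩
      change mink (D.e t) _ = _
      rw [mink_smul_right, D.mem_tight.1 ht, mul_zero, Pi.zero_apply]
  have := φ.finrank_range_add_finrank_ker
  rw [LinearMap.range_eq_top.2 hsurj, finrank_top, hker,
    finrank_span_singleton (D.ne_zero_of_verts hv), Module.finrank_fintype_fun_eq_card,
    Module.finrank_fintype_fun_eq_card, Fintype.card_coe, Fintype.card_fin] at this
  omega

end Finite

section Ideal

variable {D} {v : Fin (n + 1) → ℝ}

lemma exists_add_eq_smul (hv : v ∈ D.verts) (h0 : mink v v = 0) {i j : ι}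
    (hi : i ∈ D.tight v) (hj : j ∈ D.tight v) (hij : i ≠ j) (h : mink (D.e i) (D.e j) ≠ 0) :
    ∃ c : ℝ, 0 < c ∧ D.e i + D.e j = c • v := by
  have hv0 := D.apply_zero_of_verts hv
  have hw := eq_smul_of_orthogonal h0.le (by rw [hv0]; exact one_pos)
    (by rw [mink_comm, mink_add_left, D.mem_tight.1 hi, D.mem_tight.1 hj, add_zero])
    (D.mink_add_self_nonpos hij h)
  refine ⟨_, ?_, hw⟩
  set c := (D.e i + D.e j) 0 / v 0
  have h1 : mink (D.e i + D.e j) D.pt = c * mink v D.pt := by rw [hw, mink_smul_left]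
  rw [mink_add_left] at h1
  have h2 := D.mink_pt_neg (D.mem_cone_of_verts hv) (D.ne_zero_of_verts hv)
  have h3 := D.pt_neg i
  have h4 := D.pt_neg j
  by_contra hc
  nlinarith [mul_nonneg_of_nonpos_of_nonpos (not_lt.1 hc) h2.le]

lemma exists_nonorthogonal (hv : v ∈ D.verts) (h0 : mink v v = 0) {t : ι}
    (ht : t ∈ D.tight v) : ∃ j ∈ D.tight v, t ≠ j ∧ mink (D.e t) (D.e j) ≠ 0 := by
  by_contra! hcon
  obtain ⟨ε, hε, h⟩ := exists_pos_perturbation (fun i => mink (D.e i) v)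
    (fun i => mink (D.e i) (D.e t))
  have hmem : v - ε • D.e t ∈ D.cone := by
    intro i
    rw [mink_sub_right, mink_smul_right]
    by_cases hi : i ∈ D.tight v
    · rw [D.mem_tight.1 hi]
      by_cases hit : t = i
      · rw [← hit, D.unit]
        linarith
      · rw [mink_comm, hcon i hi hit]
        simp
    · exact (h i (D.mink_neg_of_notMem_tight (D.mem_cone_of_verts hv) hi)).2.le
  have h1 := (D.causal _ hmem).1
  have h2 : mink v (D.e t) = 0 := by rw [mink_comm, D.mem_tight.1 ht]
  simp only [mink_sub_left, mink_sub_right, mink_smul_left, mink_smul_right, D.unit, h0, h2,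
    D.mem_tight.1 ht] at h1
  nlinarith

/-- The wall through an ideal vertex that is parallel to a given one. -/
def opp (D : RightAngledCone n ι) (v : Fin (n + 1) → ℝ) (t : ι) : ι :=
  open Classical in
  if h : ∃ j ∈ D.tight v, t ≠ j ∧ mink (D.e t) (D.e j) ≠ 0 then h.choose else t

lemma opp_spec (hv : v ∈ D.verts) (h0 : mink v v = 0) {t : ι} (ht : t ∈ D.tight v) :
    D.opp v t ∈ D.tight v ∧ t ≠ D.opp v t ∧ mink (D.e t) (D.e (D.opp v t)) ≠ 0 := by
  have h := exists_nonorthogonal hv h0 ht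
  rw [opp, dif_pos h]
  exact h.choose_spec

lemma opp_mem (hv : v ∈ D.verts) (h0 : mink v v = 0) {t : ι} (ht : t ∈ D.tight v) :
    D.opp v t ∈ D.tight v := (opp_spec hv h0 ht).1

lemma eq_opp (hv : v ∈ D.verts) (h0 : mink v v = 0) {t j : ι} (ht : t ∈ D.tight v)
    (hj : j ∈ D.tight v) (hne : t ≠ j) (h : mink (D.e t) (D.e j) ≠ 0) : j = D.opp v t := by
  obtain ⟨ho, hto, hoo⟩ := opp_spec hv h0 ht
  obtain ⟨c, -, hc⟩ := exists_add_eq_smul hv h0 ht hj hne h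
  obtain ⟨d, -, hd⟩ := exists_add_eq_smul hv h0 ht ho hto hoo
  by_contra hjo
  refine D.mink_walls_ne_one _ _ hjo ?_
  have htv := D.mem_tight.1 ht
  have hvt : mink v (D.e t) = 0 := by rw [mink_comm, htv]
  rw [eq_sub_of_add_eq' hc, eq_sub_of_add_eq' hd]
  simp [mink_sub_left, mink_sub_right, mink_smul_left, mink_smul_right, D.unit, h0, htv, hvt]

lemma opp_opp (hv : v ∈ D.verts) (h0 : mink v v = 0) {t : ι} (ht : t ∈ D.tight v) :
    D.opp v (D.opp v t) = t := by
  obtain ⟨ho, hto, hoo⟩ := opp_spec hv h0 ht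
  exact (eq_opp hv h0 ho ht hto.symm (mt D.mink_eq_zero_comm.1 hoo)).symm

lemma exists_add_opp (hv : v ∈ D.verts) (h0 : mink v v = 0) {t : ι} (ht : t ∈ D.tight v) :
    ∃ c : ℝ, 0 < c ∧ D.e t + D.e (D.opp v t) = c • v := by
  obtain ⟨ho, hto, hoo⟩ := opp_spec hv h0 ht
  exact exists_add_eq_smul hv h0 ht ho hto hoo

/-- A clique through an ideal vertex extends to one meeting every pair of parallel walls, with
prescribed choices. -/
lemma exists_transversal (hv : v ∈ D.verts) (h0 : mink v v = 0) {S : Finset ι}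
    (hS : D.IsClique S) (hSv : S ⊆ D.tight v) (q : ι → Prop)
    (hq : ∀ t ∈ D.tight v, q t ∨ q (D.opp v t)) :
    ∃ M, D.IsClique M ∧ S ⊆ M ∧ M ⊆ D.tight v ∧ (∀ t ∈ M, t ∉ S → q t) ∧
      ∀ t ∈ D.tight v, t ∈ M ∨ D.opp v t ∈ M := by
  classical
  obtain ⟨M, hM, hmax⟩ := Finset.exists_max_image
    (Finset.univ.filter fun M : Finset ι =>
      D.IsClique M ∧ S ⊆ M ∧ M ⊆ D.tight v ∧ ∀ t ∈ M, t ∉ S → q t) Finset.card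
    ⟨S, by simpa using ⟨hS, hSv, fun t ht ht' => absurd ht ht'⟩⟩
  simp only [Finset.mem_filter, Finset.mem_univ, true_and] at hM hmax
  obtain ⟨h1, h2, h3, h4⟩ := hM
  have key : ∀ t ∈ D.tight v, q t → t ∈ M ∨ D.opp v t ∈ M := by
    intro t ht hqt
    by_contra! hcon
    have hl : t ∈ D.link M := by
      refine D.mem_link.2 fun s hs => ?_
      by_contra hts
      exact hcon.2 (eq_opp hv h0 ht (h3 hs) (fun h => hcon.1 (h ▸ hs)) hts ▸ hs)
    have := hmax (insert t M) ⟨D.isClique_insert h1 hl, h2.trans (Finset.subset_insert _ _),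
      Finset.insert_subset ht h3, fun s hs hsS => by
        rcases Finset.mem_insert.1 hs with rfl | hs
        · exact hqt
        · exact h4 s hs hsS⟩
    rw [Finset.card_insert_of_notMem hcon.1] at this
    omega
  refine ⟨M, h1, h2, h3, h4, fun t ht => ?_⟩
  rcases hq t ht with h | h
  · exact key t ht h
  · have := key _ (opp_mem hv h0 ht) h
    rw [opp_opp hv h0 ht] at this
    exact this.symm

lemma mink_eq_zero_of_transversal (hv : v ∈ D.verts) (h0 : mink v v = 0) {M : Finset ι}
    (htr : ∀ t ∈ D.tight v, t ∈ M ∨ D.opp v t ∈ M) {y : Fin (n + 1) → ℝ}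
    (hy : ∀ t ∈ M, mink (D.e t) y = 0) (hvy : mink v y = 0) : y = y 0 • v := by
  refine D.eq_smul_of_tight hv fun i hi => ?_
  have hi' := D.mem_tight.2 hi
  rcases htr i hi' with h | h
  · exact hy i h
  · obtain ⟨c, -, hc⟩ := exists_add_opp hv h0 hi'
    rw [eq_sub_of_add_eq hc, mink_sub_left, mink_smul_left, hvy, hy _ h]
    simp

lemma mink_sum_tight {M : Finset ι} (hMv : M ⊆ D.tight v) (c : ι → ℝ) :
    mink v (∑ t ∈ M, c t • D.e t) = 0 := by
  rw [mink_sum_right]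
  refine Finset.sum_eq_zero fun t ht => ?_
  rw [mink_smul_right, mink_comm, D.mem_tight.1 (hMv ht), mul_zero]

/-- The coordinates of a vector with respect to a transversal clique at an ideal vertex. -/
lemma exists_decomposition_ideal (hv : v ∈ D.verts) (h0 : mink v v = 0) {M : Finset ι}
    (hM : D.IsClique M) (hMv : M ⊆ D.tight v)
    (htr : ∀ t ∈ D.tight v, t ∈ M ∨ D.opp v t ∈ M) (x : Fin (n + 1) → ℝ) :
    ∃ a : ℝ, x = a • v + (mink v x / mink v (D.proj M)) • D.proj M
      + ∑ t ∈ M, mink (D.e t) x • D.e t := by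
  set b := mink v x / mink v (D.proj M) with hb
  set y := x - b • D.proj M - ∑ t ∈ M, mink (D.e t) x • D.e t with hydef
  have hy := mink_eq_zero_of_transversal hv h0 htr (y := y)
    (fun t ht => by
      rw [hydef, mink_sub_right, mink_sub_right, mink_smul_right, D.mink_proj_of_mem hM ht,
        D.mink_sum_clique hM ht fun t => mink (D.e t) x]
      ring)
    (by
      rw [hydef, mink_sub_right, mink_sub_right, mink_smul_right,
        mink_sum_tight hMv fun t => mink (D.e t) x, hb,
        div_mul_cancel₀ _ (D.mink_proj_vert_neg hM hv).ne]
      ring)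
  refine ⟨y 0, ?_⟩
  rw [← hy, hydef]
  abel

lemma card_transversal (hv : v ∈ D.verts) (h0 : mink v v = 0) {M : Finset ι}
    (hM : D.IsClique M) (hMv : M ⊆ D.tight v)
    (htr : ∀ t ∈ D.tight v, t ∈ M ∨ D.opp v t ∈ M) : M.card + 1 = n := by
  classical
  let φ : (Fin (n + 1) → ℝ) →ₗ[ℝ] (M → ℝ) × ℝ :=
    (LinearMap.pi fun t : M => minkLin (D.e t)).prod (minkLin v)
  have hsurj : Function.Surjective φ := by
    rintro ⟨c, a⟩
    refine ⟨(∑ t ∈ M, (if h : t ∈ M then c ⟨t, h⟩ else 0) • D.e t)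
      + (a / mink v (D.proj M)) • D.proj M, Prod.ext (funext fun t => ?_) ?_⟩
    · change mink (D.e t) _ = c t
      rw [mink_add_right, mink_smul_right, D.mink_proj_of_mem hM t.2,
        D.mink_sum_clique hM t.2 fun t => if h : t ∈ M then c ⟨t, h⟩ else 0, dif_pos t.2]
      ring
    · change mink v _ = a
      rw [mink_add_right, mink_smul_right,
        mink_sum_tight hMv fun t => if h : t ∈ M then c ⟨t, h⟩ else 0,
        div_mul_cancel₀ _ (D.mink_proj_vert_neg hM hv).ne, zero_add]
  have hker : LinearMap.ker φ = Submodule.span ℝ {v} := by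
    ext y
    rw [Submodule.mem_span_singleton, LinearMap.mem_ker]
    constructor
    · intro h
      exact ⟨y 0, (mink_eq_zero_of_transversal hv h0 htr
        (fun t ht => congrFun (congrArg Prod.fst h) ⟨t, ht⟩) (congrArg Prod.snd h)).symm⟩
    · rintro ⟨a, rfl⟩
      refine Prod.ext (funext fun t => ?_) ?_
      · change mink (D.e t) _ = 0
        rw [mink_smul_right, D.mem_tight.1 (hMv t.2), mul_zero]
      · change mink v _ = 0
        rw [mink_smul_right, h0, mul_zero]
  have := φ.finrank_range_add_finrank_ker
  rw [LinearMap.range_eq_top.2 hsurj, finrank_top, hker,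
    finrank_span_singleton (D.ne_zero_of_verts hv)] at this
  simpa using this

end Ideal

end RightAngledCone

namespace RightAngledCone

variable {n : ℕ} {ι : Type} (D : RightAngledCone n ι)

lemma timelike_of_ne_zero {v : Fin (n + 1) → ℝ} (hv : v ∈ D.verts) (h : mink v v ≠ 0) :
    mink v v < 0 :=
  lt_of_le_of_ne (D.causal v (D.mem_cone_of_verts hv)).1 h

/-- The functional `l`, normalized to vanish at height one point `v`. -/
def lam (l : (Fin (n + 1) → ℝ) →ₗ[ℝ] ℝ) (v : Fin (n + 1) → ℝ) : (Fin (n + 1) → ℝ) →ₗ[ℝ] ℝ :=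
  l - l v • LinearMap.proj 0

lemma lam_apply (l : (Fin (n + 1) → ℝ) →ₗ[ℝ] ℝ) (v x : Fin (n + 1) → ℝ) :
    lam l v x = l x - x 0 * l v := by
  simp [lam, mul_comm]

lemma lam_neg (l : (Fin (n + 1) → ℝ) →ₗ[ℝ] ℝ) (v x : Fin (n + 1) → ℝ) :
    lam (-l) v x = -lam l v x := by
  simp only [lam_apply, LinearMap.neg_apply]
  ring

lemma lam_self (l : (Fin (n + 1) → ℝ) →ₗ[ℝ] ℝ) {v : Fin (n + 1) → ℝ} (hv : v ∈ D.verts) :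
    lam l v v = 0 := by
  rw [lam_apply, D.apply_zero_of_verts hv, one_mul, sub_self]

/-- A functional separating the vertices from each other and from the edges through them. -/
def Generic (l : (Fin (n + 1) → ℝ) →ₗ[ℝ] ℝ) : Prop :=
  (∀ v ∈ D.verts, ∀ w ∈ D.verts, l v = l w → v = w) ∧
    ∀ v ∈ D.verts, ∀ E, D.IsClique E → E.card + 1 = n → lam l v (D.proj E) ≠ 0

lemma Generic.neg {D : RightAngledCone n ι} {l : (Fin (n + 1) → ℝ) →ₗ[ℝ] ℝ}
    (h : D.Generic l) : D.Generic (-l) :=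
  ⟨fun v hv w hw hvw => h.1 v hv w hw (by simpa using hvw), fun v hv E hE hc => by
    rw [lam_neg]
    exact neg_ne_zero.2 (h.2 v hv E hE hc)⟩

variable [Fintype ι]

/-- The vertices on the face of a clique. -/
def vertsOn (S : Finset ι) : Finset (Fin (n + 1) → ℝ) :=
  open Classical in D.finite_verts.toFinset.filter fun v => S ⊆ D.tight v

/-- The ideal vertices on the face of a clique. -/
def idealOn (S : Finset ι) : Finset (Fin (n + 1) → ℝ) :=
  open Classical in (D.vertsOn S).filter fun v => mink v v = 0

@[simp] lemma mem_vertsOn {S : Finset ι} {v : Fin (n + 1) → ℝ} :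
    v ∈ D.vertsOn S ↔ v ∈ D.verts ∧ S ⊆ D.tight v := by
  simp [vertsOn]

@[simp] lemma mem_idealOn {S : Finset ι} {v : Fin (n + 1) → ℝ} :
    v ∈ D.idealOn S ↔ (v ∈ D.verts ∧ S ⊆ D.tight v) ∧ mink v v = 0 := by
  simp [idealOn]

/-- The vertex `v` maximizes the functional `l` on the face of `S`. -/
def IsTop (l : (Fin (n + 1) → ℝ) →ₗ[ℝ] ℝ) (S : Finset ι) (v : Fin (n + 1) → ℝ) : Prop :=
  v ∈ D.vertsOn S ∧ ∀ x ∈ D.faceCone S, lam l v x ≤ 0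

lemma tight_proj {S : Finset ι} (hS : D.IsClique S) : D.tight (D.proj S) = S := by
  ext i
  rw [D.mem_tight]
  exact ⟨fun h => by_contra fun hi => (D.mink_proj_neg S hi).ne h, D.mink_proj_of_mem hS⟩

lemma exists_generic : ∃ l, D.Generic l := by
  let Z : Set (Fin (n + 1) → ℝ) := Set.image2 (fun v w => v - w) D.verts D.verts ∪
    Set.image2 (fun v E => D.proj E - D.proj E 0 • v) D.verts Set.univ
  have hZ : Z.Finite := (D.finite_verts.image2 _ D.finite_verts).union
    (D.finite_verts.image2 _ Set.finite_univ)
  have : Finite {z : Z // (z : Fin (n + 1) → ℝ) ≠ 0} := by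
    have := hZ.to_subtype
    infer_instance
  obtain ⟨l, hl⟩ := Module.exists_dual_forall_apply_ne_zero (K := ℝ)
    (fun z : {z : Z // (z : Fin (n + 1) → ℝ) ≠ 0} => ((z : Z) : Fin (n + 1) → ℝ)) fun z => z.2
  have hl' : ∀ z ∈ Z, z ≠ 0 → l z ≠ 0 := fun z hz h => hl ⟨⟨z, hz⟩, h⟩
  refine ⟨l, fun v hv w hw hvw => ?_, fun v hv E hE hc => ?_⟩
  · by_contra hne
    refine hl' (v - w) (Or.inl ⟨v, hv, w, hw, rfl⟩) (sub_ne_zero.2 hne) ?_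
    rw [map_sub, hvw, sub_self]
  · have h := hl' (D.proj E - D.proj E 0 • v) (Or.inr ⟨v, hv, E, trivial, rfl⟩) ?_
    · rwa [map_sub, map_smul, smul_eq_mul, ← lam_apply] at h
    · intro h0
      have h1 := sub_eq_zero.1 h0
      have hpos := D.proj_pos hE
      have ht : D.tight v = E := by
        rw [← D.tight_proj hE]
        ext i
        rw [D.mem_tight, D.mem_tight, h1, mink_smul_right]
        simp [hpos.ne']
      have hf : mink v v < 0 := by
        have h2 := D.proj_timelike hE
        rw [h1, mink_smul_left, mink_smul_right] at h2
        by_contra h3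
        have := mul_nonneg hpos.le (mul_nonneg hpos.le (not_lt.1 h3))
        linarith
      have := card_tight_finite hv hf
      rw [ht] at this
      omega

lemma exists_isTop {S : Finset ι} (hS : D.IsClique S) (l : (Fin (n + 1) → ℝ) →ₗ[ℝ] ℝ) :
    ∃ v, D.IsTop l S v := by
  obtain ⟨v, hv, hSv, hmax⟩ := D.exists_vert_max hS l
  refine ⟨v, D.mem_vertsOn.2 ⟨hv, fun s hs => D.mem_tight.2 (hSv s hs)⟩, fun x hx => ?_⟩
  rw [lam_apply]
  linarith [hmax x hx]

lemma mem_faceCone_of_vertsOn {S : Finset ι} {v : Fin (n + 1) → ℝ} (hv : v ∈ D.vertsOn S) :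
    v ∈ D.faceCone S :=
  have h := D.mem_vertsOn.1 hv
  ⟨D.mem_cone_of_verts h.1, fun _ hs => D.mem_tight.1 (h.2 hs)⟩

lemma IsTop.unique {D : RightAngledCone n ι} {l : (Fin (n + 1) → ℝ) →ₗ[ℝ] ℝ}
    (hl : D.Generic l) {S : Finset ι} {v w : Fin (n + 1) → ℝ} (hv : D.IsTop l S v)
    (hw : D.IsTop l S w) : v = w := by
  have hv' := (D.mem_vertsOn.1 hv.1).1
  have hw' := (D.mem_vertsOn.1 hw.1).1
  have h1 := hv.2 w (D.mem_faceCone_of_vertsOn hw.1)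
  have h2 := hw.2 v (D.mem_faceCone_of_vertsOn hv.1)
  rw [lam_apply, D.apply_zero_of_verts hw'] at h1
  rw [lam_apply, D.apply_zero_of_verts hv'] at h2
  exact hl.1 v hv' w hw' (by linarith)

section LocalFinite

variable {D} {v : Fin (n + 1) → ℝ}

lemma lam_eq_sum_finite (hv : v ∈ D.verts) (hf : mink v v < 0)
    (l : (Fin (n + 1) → ℝ) →ₗ[ℝ] ℝ) (x : Fin (n + 1) → ℝ) :
    lam l v x = ∑ t ∈ D.tight v, mink (D.e t) x * lam l v (D.e t) := by
  obtain ⟨a, ha⟩ := exists_decomposition_finite hv hf x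
  conv_lhs => rw [ha]
  simp [D.lam_self l hv]

lemma lam_proj_erase [DecidableEq ι] (hv : v ∈ D.verts) (hf : mink v v < 0)
    (l : (Fin (n + 1) → ℝ) →ₗ[ℝ] ℝ) {t : ι} (ht : t ∈ D.tight v) :
    lam l v (D.proj ((D.tight v).erase t)) =
      mink (D.e t) (D.proj ((D.tight v).erase t)) * lam l v (D.e t) := by
  rw [lam_eq_sum_finite hv hf l, Finset.sum_eq_single_of_mem t ht]
  intro s hs hst
  rw [D.mink_proj_of_mem ((isClique_tight hv hf).subset D (Finset.erase_subset _ _))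
    (Finset.mem_erase.2 ⟨hst, hs⟩), zero_mul]

lemma lam_wall_ne_zero (hv : v ∈ D.verts) (hf : mink v v < 0)
    {l : (Fin (n + 1) → ℝ) →ₗ[ℝ] ℝ} (hl : D.Generic l) {t : ι} (ht : t ∈ D.tight v) :
    lam l v (D.e t) ≠ 0 := by
  classical
  intro h
  refine hl.2 v hv ((D.tight v).erase t)
    ((isClique_tight hv hf).subset D (Finset.erase_subset _ _)) ?_ ?_
  · rw [Finset.card_erase_add_one ht, card_tight_finite hv hf]
  · rw [lam_proj_erase hv hf l ht, h, mul_zero]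

lemma isTop_iff_finite (hv : v ∈ D.verts) (hf : mink v v < 0)
    {l : (Fin (n + 1) → ℝ) →ₗ[ℝ] ℝ} {R : Finset ι} (hR : R ⊆ D.tight v) :
    D.IsTop l R v ↔ ∀ t ∈ D.tight v, t ∉ R → 0 ≤ lam l v (D.e t) := by
  classical
  constructor
  · intro h t ht htR
    have hcl := (isClique_tight hv hf).subset D (Finset.erase_subset t (D.tight v))
    have h1 := h.2 _ (D.faceCone_anti (R := (D.tight v).erase t) (fun s hs => Finset.mem_erase.2
      ⟨fun hst => htR (hst ▸ hs), hR hs⟩) (D.proj_mem_faceCone hcl))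
    rw [lam_proj_erase hv hf l ht] at h1
    have h2 := D.mink_proj_neg ((D.tight v).erase t) (Finset.notMem_erase t _)
    by_contra h3
    nlinarith [mul_pos_of_neg_of_neg h2 (not_le.1 h3)]
  · refine fun h => ⟨D.mem_vertsOn.2 ⟨hv, hR⟩, fun x hx => ?_⟩
    rw [lam_eq_sum_finite hv hf l]
    refine Finset.sum_nonpos fun t ht => ?_
    by_cases htR : t ∈ R
    · rw [hx.2 t htR, zero_mul]
    · exact mul_nonpos_of_nonpos_of_nonneg (hx.1 t) (h t ht htR)

/-- Near a finite vertex, a face has its top resp. bottom there according to a subset of the walls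
through the vertex. -/
lemma exists_local_finite [DecidableEq ι] (hv : v ∈ D.verts) (hf : mink v v < 0)
    {l : (Fin (n + 1) → ℝ) →ₗ[ℝ] ℝ} (hl : D.Generic l) :
    ∃ U : Finset ι, ∀ R ⊆ D.tight v,
      (D.IsTop l R v ↔ D.tight v \ R ⊆ U) ∧ (D.IsTop (-l) R v ↔ Disjoint (D.tight v \ R) U) := by
  classical
  refine ⟨(D.tight v).filter fun t => 0 < lam l v (D.e t), fun R hR => ⟨?_, ?_⟩⟩
  · rw [isTop_iff_finite hv hf hR, Finset.subset_iff]
    refine forall_congr' fun t => ?_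
    simp only [Finset.mem_sdiff, Finset.mem_filter]
    exact ⟨fun h ht => ⟨ht.1, lt_of_le_of_ne (h ht.1 ht.2) (lam_wall_ne_zero hv hf hl ht.1).symm⟩,
      fun h ht htR => (h ⟨ht, htR⟩).2.le⟩
  · rw [isTop_iff_finite hv hf hR, Finset.disjoint_left]
    refine forall_congr' fun t => ?_
    simp only [Finset.mem_sdiff, Finset.mem_filter, lam_neg, not_and, not_lt, Left.nonneg_neg_iff]
    tauto

end LocalFinite

end RightAngledCone

namespace RightAngledCone

variable {n : ℕ} {ι : Type} {D : RightAngledCone n ι} [Fintype ι]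

/-- A choice `H` of one wall out of each pair of parallel walls through the ideal vertex `v` of the
face of the clique `S`. -/
structure IsFrame (D : RightAngledCone n ι) (v : Fin (n + 1) → ℝ) (S H : Finset ι) : Prop where
  vert : v ∈ D.verts
  null : mink v v = 0
  clique : D.IsClique S
  sub : S ⊆ D.tight v
  frame_sub : H ⊆ D.tight v
  frame_link : H ⊆ D.link S
  frame_clique : D.IsClique H
  cover : ∀ t ∈ D.tight v, t ∈ D.link S → t ∈ H ∨ D.opp v t ∈ H

lemma mink_nonpos_of_ideal {v : Fin (n + 1) → ℝ} (hv : v ∈ D.verts) (h0 : mink v v = 0)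
    {x : Fin (n + 1) → ℝ} (hx : x ∈ D.cone) : mink v x ≤ 0 := by
  obtain ⟨t, ht⟩ : (D.tight v).Nonempty := by
    by_contra hne
    have h := D.eq_smul_of_tight hv (y := D.pt) fun i hi =>
      absurd ⟨i, D.mem_tight.2 hi⟩ hne
    have h1 := D.pt_timelike
    rw [h, mink_smul_left, mink_smul_right, h0] at h1
    simp at h1
  obtain ⟨c, hc, hadd⟩ := exists_add_opp hv h0 ht
  have h1 := hx t
  have h2 := hx (D.opp v t)
  have h3 : c * mink v x ≤ 0 := by
    rw [← mink_smul_left, ← hadd, mink_add_left]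
    linarith
  exact nonpos_of_mul_nonpos_right h3 hc

namespace IsFrame

variable {v : Fin (n + 1) → ℝ} {S H : Finset ι}

lemma opp_mem_tight (F : D.IsFrame v S H) {t : ι} (ht : t ∈ H) : D.opp v t ∈ D.tight v :=
  opp_mem F.vert F.null (F.frame_sub ht)

lemma opp_mem_link (F : D.IsFrame v S H) {t : ι} (ht : t ∈ H) : D.opp v t ∈ D.link S := by
  refine D.mem_link.2 fun s hs => by_contra fun h => ?_
  have ht' := F.frame_sub ht
  have := eq_opp F.vert F.null (F.opp_mem_tight ht) (F.sub hs)
    (fun hne => ?_) h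
  · rw [opp_opp F.vert F.null ht'] at this
    exact D.notMem_of_mem_link (F.frame_link ht) (this ▸ hs)
  · rw [← hne] at hs
    exact (opp_spec F.vert F.null ht').2.2 (D.mem_link.1 (F.frame_link ht) _ hs)

lemma opp_notMem (F : D.IsFrame v S H) {t : ι} (ht : t ∈ H) : D.opp v t ∉ H := fun h => by
  obtain ⟨-, h1, h2⟩ := opp_spec F.vert F.null (F.frame_sub ht)
  exact h2 (F.frame_clique t ht _ h h1)

lemma opp_injOn (F : D.IsFrame v S H) : Set.InjOn (D.opp v) H := fun s hs t ht h => by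
  rw [← opp_opp F.vert F.null (F.frame_sub hs), h, opp_opp F.vert F.null (F.frame_sub ht)]

lemma orthogonal_opp (F : D.IsFrame v S H) {s t : ι} (hs : s ∈ H) (ht : t ∈ H) (hst : s ≠ t) :
    mink (D.e s) (D.e (D.opp v t)) = 0 := by
  by_contra h
  refine hst ?_
  rw [← opp_opp F.vert F.null (F.frame_sub hs), ← eq_opp F.vert F.null (F.frame_sub hs)
    (F.opp_mem_tight ht) (fun hne => F.opp_notMem ht (hne ▸ hs)) h,
    opp_opp F.vert F.null (F.frame_sub ht)]

lemma opp_orthogonal_opp (F : D.IsFrame v S H) {s t : ι} (hs : s ∈ H) (ht : t ∈ H) (hst : s ≠ t) :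
    mink (D.e (D.opp v s)) (D.e (D.opp v t)) = 0 := by
  by_contra h
  have := eq_opp F.vert F.null (F.opp_mem_tight hs) (F.opp_mem_tight ht)
    (fun hne => hst (F.opp_injOn hs ht hne)) h
  rw [opp_opp F.vert F.null (F.frame_sub hs)] at this
  exact F.opp_notMem ht (this ▸ hs)

end IsFrame

variable [DecidableEq ι]

/-- The clique consisting of `S`, walls in `A`, and walls opposite to walls in `B`. -/
def cubeFace (D : RightAngledCone n ι) (v : Fin (n + 1) → ℝ) (S A B : Finset ι) : Finset ι :=
  S ∪ (A ∪ B.image (D.opp v))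

lemma mem_cubeFace {v : Fin (n + 1) → ℝ} {S A B : Finset ι} {i : ι} :
    i ∈ D.cubeFace v S A B ↔ i ∈ S ∨ i ∈ A ∨ ∃ j ∈ B, D.opp v j = i := by
  simp [cubeFace]

lemma cubeFace_subset {v : Fin (n + 1) → ℝ} {S A B A' B' : Finset ι} (hA : A ⊆ A')
    (hB : B ⊆ B') : D.cubeFace v S A B ⊆ D.cubeFace v S A' B' :=
  Finset.union_subset_union_right
    (Finset.union_subset_union hA (Finset.image_subset_image hB))

lemma subset_cubeFace {v : Fin (n + 1) → ℝ} {S A B : Finset ι} : S ⊆ D.cubeFace v S A B :=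
  Finset.subset_union_left

lemma exists_isFrame {v : Fin (n + 1) → ℝ} (hv : v ∈ D.verts) (h0 : mink v v = 0)
    {S : Finset ι} (hS : D.IsClique S) (hSv : S ⊆ D.tight v) (q : ι → Prop)
    (hq : ∀ t ∈ D.tight v, q t ∨ q (D.opp v t)) :
    ∃ H, D.IsFrame v S H ∧ ∀ t ∈ H, q t := by
  obtain ⟨M, h1, h2, h3, h4, h5⟩ := exists_transversal hv h0 hS hSv q hq
  refine ⟨M \ S, ⟨hv, h0, hS, hSv, Finset.sdiff_subset.trans h3, fun t ht => ?_,
    h1.subset D Finset.sdiff_subset, fun t ht htS => ?_⟩, fun t ht => ?_⟩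
  · rw [Finset.mem_sdiff] at ht
    exact D.mem_link_of_isClique h1 h2 ht.1 ht.2
  · simp only [Finset.mem_sdiff]
    refine (h5 t ht).imp (fun h => ⟨h, D.notMem_of_mem_link htS⟩) fun h => ⟨h, fun hs => ?_⟩
    exact (opp_spec hv h0 ht).2.2 (D.mem_link.1 htS _ hs)
  · rw [Finset.mem_sdiff] at ht
    exact h4 t ht.1 ht.2

namespace IsFrame

variable {v : Fin (n + 1) → ℝ} {S H : Finset ι}

section CubeFace

variable {A B : Finset ι}

lemma cubeFace_sub (F : D.IsFrame v S H) (hA : A ⊆ H) (hB : B ⊆ H) :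
    D.cubeFace v S A B ⊆ D.tight v := by
  intro i hi
  rcases mem_cubeFace.1 hi with h | h | ⟨j, hj, rfl⟩
  · exact F.sub h
  · exact F.frame_sub (hA h)
  · exact F.opp_mem_tight (hB hj)

lemma cubeFace_inter_frame (F : D.IsFrame v S H) (hA : A ⊆ H) (hB : B ⊆ H) :
    D.cubeFace v S A B ∩ H = A := by
  ext i
  rw [Finset.mem_inter, mem_cubeFace]
  constructor
  · rintro ⟨h | h | ⟨j, hj, rfl⟩, hi⟩
    · exact absurd h (D.notMem_of_mem_link (F.frame_link hi))
    · exact h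
    · exact absurd hi (F.opp_notMem (hB hj))
  · exact fun h => ⟨Or.inr (Or.inl h), hA h⟩

lemma opp_mem_cubeFace_iff (F : D.IsFrame v S H) (hA : A ⊆ H) (hB : B ⊆ H)
    {i : ι} (hi : i ∈ H) : D.opp v i ∈ D.cubeFace v S A B ↔ i ∈ B := by
  rw [mem_cubeFace]
  constructor
  · rintro (h | h | ⟨j, hj, h⟩)
    · exact absurd h (D.notMem_of_mem_link (F.opp_mem_link hi))
    · exact absurd (hA h) (F.opp_notMem hi)
    · exact F.opp_injOn (hB hj) hi h ▸ hj
  · exact fun h => Or.inr (Or.inr ⟨i, h, rfl⟩)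

lemma card_cubeFace (F : D.IsFrame v S H) (hA : A ⊆ H) (hB : B ⊆ H) :
    (D.cubeFace v S A B).card = S.card + (A.card + B.card) := by
  rw [cubeFace, Finset.card_union_of_disjoint, Finset.card_union_of_disjoint,
    Finset.card_image_of_injOn (F.opp_injOn.mono hB)]
  · rw [Finset.disjoint_left]
    rintro i hi hi'
    obtain ⟨j, hj, rfl⟩ := Finset.mem_image.1 hi'
    exact F.opp_notMem (hB hj) (hA hi)
  · rw [Finset.disjoint_left]
    rintro i hi hi'
    rcases Finset.mem_union.1 hi' with h | h
    · exact D.notMem_of_mem_link (F.frame_link (hA h)) hi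
    · obtain ⟨j, hj, rfl⟩ := Finset.mem_image.1 h
      exact D.notMem_of_mem_link (F.opp_mem_link (hB hj)) hi

lemma isClique_cubeFace (F : D.IsFrame v S H) (hA : A ⊆ H) (hB : B ⊆ H) (hAB : Disjoint A B) :
    D.IsClique (D.cubeFace v S A B) := by
  intro i hi j hj hij
  rw [mem_cubeFace] at hi hj
  rcases hi with hi | hi | ⟨i, hi, rfl⟩ <;> rcases hj with hj | hj | ⟨j, hj, rfl⟩
  · exact F.clique i hi j hj hij
  · exact D.mink_eq_zero_comm.1 (D.mem_link.1 (F.frame_link (hA hj)) i hi)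
  · exact D.mink_eq_zero_comm.1 (D.mem_link.1 (F.opp_mem_link (hB hj)) i hi)
  · exact D.mem_link.1 (F.frame_link (hA hi)) j hj
  · exact F.frame_clique i (hA hi) j (hA hj) hij
  · exact F.orthogonal_opp (hA hi) (hB hj) fun h => Finset.disjoint_left.1 hAB hi (h ▸ hj)
  · exact D.mem_link.1 (F.opp_mem_link (hB hi)) j hj
  · exact D.mink_eq_zero_comm.1 (F.orthogonal_opp (hA hj) (hB hi)
      fun h => Finset.disjoint_left.1 hAB hj (h ▸ hi))
  · exact F.opp_orthogonal_opp (hB hi) (hB hj) fun h => hij (h ▸ rfl)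

end CubeFace

lemma cubeFace_transversal (F : D.IsFrame v S H) (C : Finset ι) {t : ι} (ht : t ∈ D.tight v) :
    t ∈ D.cubeFace v S C (H \ C) ∨ D.opp v t ∈ D.cubeFace v S C (H \ C) := by
  by_cases htS : t ∈ S
  · exact Or.inl (subset_cubeFace htS)
  by_cases hoS : D.opp v t ∈ S
  · exact Or.inr (subset_cubeFace hoS)
  have hl : t ∈ D.link S := by
    refine D.mem_link.2 fun s hs => by_contra fun h => hoS ?_
    rw [← eq_opp F.vert F.null ht (F.sub hs) (fun h => htS (h ▸ hs)) h]
    exact hs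
  have key : ∀ s ∈ H, s ∈ D.cubeFace v S C (H \ C) ∨ D.opp v s ∈ D.cubeFace v S C (H \ C) := by
    intro s hs
    by_cases hC : s ∈ C
    · exact Or.inl (mem_cubeFace.2 (Or.inr (Or.inl hC)))
    · exact Or.inr (mem_cubeFace.2 (Or.inr (Or.inr ⟨s, Finset.mem_sdiff.2 ⟨hs, hC⟩, rfl⟩)))
  rcases F.cover t ht hl with h | h
  · exact key t h
  · have := key _ h
    rw [opp_opp F.vert F.null ht] at this
    exact this.symm

lemma isClique_edge (F : D.IsFrame v S H)
    {C : Finset ι} (hC : C ⊆ H) : D.IsClique (D.cubeFace v S C (H \ C)) :=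
  F.isClique_cubeFace hC Finset.sdiff_subset Finset.disjoint_sdiff

lemma card_edge (F : D.IsFrame v S H)
    {C : Finset ι} (hC : C ⊆ H) : (D.cubeFace v S C (H \ C)).card + 1 = n :=
  card_transversal F.vert F.null (F.isClique_edge hC) (F.cubeFace_sub hC Finset.sdiff_subset)
    fun _ ht => F.cubeFace_transversal C ht

lemma card_frame (F : D.IsFrame v S H) : S.card + H.card + 1 = n := by
  have h := F.card_edge (Finset.Subset.refl H)
  rw [F.card_cubeFace (Finset.Subset.refl H) Finset.sdiff_subset, Finset.sdiff_self,
    Finset.card_empty] at h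
  omega

/-- Every face through an ideal vertex is a cube face. -/
lemma eq_cubeFace (F : D.IsFrame v S H)
    {R : Finset ι} (hR : D.IsClique R) (hSR : S ⊆ R) (hRv : R ⊆ D.tight v) :
    R = D.cubeFace v S (R ∩ H) (H.filter fun t => D.opp v t ∈ R) ∧
      Disjoint (R ∩ H) (H.filter fun t => D.opp v t ∈ R) := by
  constructor
  · ext i
    rw [mem_cubeFace]
    constructor
    · intro hi
      by_cases hS : i ∈ S
      · exact Or.inl hS
      rcases F.cover i (hRv hi) (D.mem_link_of_isClique hR hSR hi hS) with h | h
      · exact Or.inr (Or.inl (Finset.mem_inter.2 ⟨hi, h⟩))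
      · have := opp_opp F.vert F.null (hRv hi)
        exact Or.inr (Or.inr ⟨_, Finset.mem_filter.2 ⟨h, this.symm ▸ hi⟩, this⟩)
    · rintro (h | h | ⟨j, hj, rfl⟩)
      · exact hSR h
      · exact (Finset.mem_inter.1 h).1
      · exact (Finset.mem_filter.1 hj).2
  · rw [Finset.disjoint_left]
    intro i hi hi'
    obtain ⟨hiR, hiH⟩ := Finset.mem_inter.1 hi
    obtain ⟨-, h1, h2⟩ := opp_spec F.vert F.null (F.frame_sub hiH)
    exact h2 (hR i hiR _ (Finset.mem_filter.1 hi').2 h1)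

lemma tight_inter_link (F : D.IsFrame v S H) : D.tight v ∩ D.link S = H ∪ H.image (D.opp v) := by
  ext i
  simp only [Finset.mem_inter, Finset.mem_union, Finset.mem_image]
  constructor
  · rintro ⟨h1, h2⟩
    exact (F.cover i h1 h2).imp id fun h => ⟨_, h, opp_opp F.vert F.null h1⟩
  · rintro (h | ⟨j, hj, rfl⟩)
    · exact ⟨F.frame_sub h, F.frame_link h⟩
    · exact ⟨F.opp_mem_tight hj, F.opp_mem_link hj⟩

lemma sum_tight_inter_link (F : D.IsFrame v S H) {M : Type*} [AddCommMonoid M] (f : ι → M) :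
    ∑ i ∈ D.tight v ∩ D.link S, f i = ∑ i ∈ H, (f i + f (D.opp v i)) := by
  rw [F.tight_inter_link, Finset.sum_union, Finset.sum_image F.opp_injOn, Finset.sum_add_distrib]
  rw [Finset.disjoint_left]
  rintro i hi hi'
  obtain ⟨j, hj, rfl⟩ := Finset.mem_image.1 hi'
  exact F.opp_notMem hj hi

end IsFrame

/-- Near an ideal vertex, the faces having their top resp. bottom there are governed by a
set of vertices of a cube. -/
lemma exists_local_ideal {v : Fin (n + 1) → ℝ} (hv : v ∈ D.verts) (h0 : mink v v = 0)
    {S : Finset ι} (hS : D.IsClique S) (hSv : S ⊆ D.tight v)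
    {l : (Fin (n + 1) → ℝ) →ₗ[ℝ] ℝ} (hl : D.Generic l) :
    ∃ (H : Finset ι) (h : Finset ι → Prop), D.IsFrame v S H ∧
      ∀ A ⊆ H, ∀ B ⊆ H, Disjoint A B →
        (D.IsTop l (D.cubeFace v S A B) v ↔ ¬ h (H \ B)) ∧
        (D.IsTop (-l) (D.cubeFace v S A B) v ↔ h A) := by
  obtain ⟨H, F, hH⟩ := exists_isFrame hv h0 hS hSv (fun t => 0 ≤ lam l v (D.e t)) (by
    intro t ht
    obtain ⟨c, -, hc⟩ := exists_add_opp hv h0 ht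
    have := congrArg (lam l v) hc
    rw [map_add, map_smul, D.lam_self l hv, smul_zero] at this
    by_contra! hcon
    linarith [hcon.1, hcon.2])
  have hcex : ∀ t, ∃ c : ℝ, t ∈ H → 0 < c ∧ D.e t + D.e (D.opp v t) = c • v := by
    intro t
    by_cases ht : t ∈ H
    · obtain ⟨c, hc⟩ := exists_add_opp hv h0 (F.frame_sub ht)
      exact ⟨c, fun _ => hc⟩
    · exact ⟨0, fun h => absurd h ht⟩
  choose c hc using hcex
  set M := D.cubeFace v S H (H \ H) with hMdef
  have hM : D.IsClique M := F.isClique_edge (Finset.Subset.refl H)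
  have hMv : M ⊆ D.tight v := F.cubeFace_sub (Finset.Subset.refl H) Finset.sdiff_subset
  have hpM := D.mink_proj_vert_neg hM hv
  set γ := lam l v (D.proj M) / (-mink v (D.proj M)) with hγ
  let G : Finset ι → ℝ := fun C => γ - ∑ t ∈ H \ C, c t * lam l v (D.e t)
  have hMSH : M = S ∪ H := by
    rw [hMdef, cubeFace, Finset.sdiff_self, Finset.image_empty, Finset.union_empty]
  have hdisj : Disjoint S H := Finset.disjoint_right.2 fun t ht =>
    D.notMem_of_mem_link (F.frame_link ht)
  have hlam : ∀ x ∈ D.faceCone S, lam l v x =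
      -mink v x * γ + ∑ t ∈ H, mink (D.e t) x * lam l v (D.e t) := by
    intro x hx
    obtain ⟨a, ha⟩ := exists_decomposition_ideal hv h0 hM hMv
      (fun t ht => F.cubeFace_transversal H ht) x
    have h1 := congrArg (lam l v) ha
    rw [map_add, map_add, map_smul, map_smul, D.lam_self l hv, map_sum, hMSH,
      Finset.sum_union hdisj, ← hMSH] at h1
    rw [h1, Finset.sum_eq_zero (s := S) fun s hs => by rw [hx.2 s hs, zero_smul, map_zero]]
    simp only [map_smul, smul_eq_mul, hγ, mul_zero, zero_add]
    congr 1
    rw [div_neg, neg_mul_neg]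
    ring
  have hopp : ∀ x, ∀ t ∈ H, mink (D.e t) x = c t * mink v x - mink (D.e (D.opp v t)) x := by
    intro x t ht
    rw [eq_sub_iff_add_eq, ← mink_add_left, (hc t ht).2, mink_smul_left]
  have hlow : ∀ A ⊆ H, ∀ B, ∀ x ∈ D.faceCone (D.cubeFace v S A B),
      -mink v x * G A ≤ lam l v x := by
    intro A hA B x hx
    rw [hlam x (D.faceCone_anti subset_cubeFace hx), mul_sub, sub_eq_add_neg,
      ← Finset.sum_sdiff hA, Finset.sum_eq_zero (s := A) fun t ht => by
        rw [hx.2 t (mem_cubeFace.2 (Or.inr (Or.inl ht))), zero_mul], add_zero, Finset.mul_sum,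
      ← Finset.sum_neg_distrib]
    refine (add_le_add_iff_left _).2 (Finset.sum_le_sum fun t ht => ?_)
    have htH := (Finset.mem_sdiff.1 ht).1
    have h1 : c t * mink v x ≤ mink (D.e t) x := by
      rw [hopp x t htH]
      linarith [hx.1 (D.opp v t)]
    linarith [mul_le_mul_of_nonneg_right h1 (hH t htH)]
  have hupp : ∀ A, ∀ B ⊆ H, ∀ x ∈ D.faceCone (D.cubeFace v S A B),
      lam l v x ≤ -mink v x * G (H \ B) := by
    intro A B hB x hx
    rw [hlam x (D.faceCone_anti subset_cubeFace hx), mul_sub, sub_eq_add_neg,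
      Finset.sdiff_sdiff_eq_self hB, ← Finset.sum_sdiff hB, Finset.mul_sum,
      ← Finset.sum_neg_distrib]
    have h1 : ∑ t ∈ H \ B, mink (D.e t) x * lam l v (D.e t) ≤ 0 :=
      Finset.sum_nonpos fun t ht => mul_nonpos_of_nonpos_of_nonneg (hx.1 t)
        (hH t (Finset.mem_sdiff.1 ht).1)
    have h2 : ∑ t ∈ B, mink (D.e t) x * lam l v (D.e t) =
        ∑ t ∈ B, -(-mink v x * (c t * lam l v (D.e t))) := by
      refine Finset.sum_congr rfl fun t ht => ?_
      rw [hopp x t (hB ht), hx.2 _ (mem_cubeFace.2 (Or.inr (Or.inr ⟨t, ht, rfl⟩)))]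
      ring
    rw [h2]
    linarith
  have hedge : ∀ C ⊆ H, 0 < -mink v (D.proj (D.cubeFace v S C (H \ C))) ∧
      lam l v (D.proj (D.cubeFace v S C (H \ C))) =
        -mink v (D.proj (D.cubeFace v S C (H \ C))) * G C ∧ G C ≠ 0 := by
    intro C hC
    have hcl := F.isClique_edge hC
    have hmem := D.proj_mem_faceCone hcl
    have heq := le_antisymm (hupp _ _ Finset.sdiff_subset _ hmem) (by
      rw [Finset.sdiff_sdiff_eq_self hC]
      exact hlow _ hC _ _ hmem)
    rw [Finset.sdiff_sdiff_eq_self hC] at heq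
    refine ⟨neg_pos.2 (D.mink_proj_vert_neg hcl hv), heq, fun h => ?_⟩
    refine hl.2 v hv _ hcl (F.card_edge hC) ?_
    rw [heq, h, mul_zero]
  have hβ : ∀ x ∈ D.cone, 0 ≤ -mink v x := fun x hx =>
    neg_nonneg.2 (mink_nonpos_of_ideal hv h0 hx)
  refine ⟨H, fun C => 0 < G C, F, fun A hA B hB hAB => ?_⟩
  have hR : v ∈ D.vertsOn (D.cubeFace v S A B) := D.mem_vertsOn.2 ⟨hv, F.cubeFace_sub hA hB⟩
  constructor
  · obtain ⟨h1, h2, h3⟩ := hedge (H \ B) Finset.sdiff_subset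
    constructor
    · intro h hpos
      have := h.2 _ (D.faceCone_anti (cubeFace_subset
        (Finset.subset_sdiff.2 ⟨hA, hAB⟩) (by rw [Finset.sdiff_sdiff_eq_self hB]))
        (D.proj_mem_faceCone (F.isClique_edge (C := H \ B) Finset.sdiff_subset)))
      rw [h2] at this
      linarith [mul_pos h1 hpos]
    · refine fun h => ⟨hR, fun x hx => (hupp A B hB x hx).trans ?_⟩
      exact mul_nonpos_of_nonneg_of_nonpos (hβ x hx.1) (not_lt.1 h)
  · obtain ⟨h1, h2, h3⟩ := hedge A hA
    constructor
    · intro h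
      have := h.2 _ (D.faceCone_anti (cubeFace_subset (Finset.Subset.refl A)
        (Finset.subset_sdiff.2 ⟨hB, hAB.symm⟩))
        (D.proj_mem_faceCone (F.isClique_edge hA)))
      rw [lam_neg, h2] at this
      by_contra hcon
      have hneg := lt_of_le_of_ne (not_lt.1 hcon) h3
      linarith [mul_neg_of_pos_of_neg h1 hneg]
    · refine fun h => ⟨hR, fun x hx => ?_⟩
      rw [lam_neg]
      linarith [hlow A hA B x hx, mul_nonneg (hβ x hx.1) h.le]

end RightAngledCone

namespace RightAngledCone

variable {n : ℕ} {ι : Type} {D : RightAngledCone n ι} [Fintype ι]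

/-- The number of times (zero, one or two) that `v` is the top or the bottom of the face of `R`. -/
def extr (D : RightAngledCone n ι) (l : (Fin (n + 1) → ℝ) →ₗ[ℝ] ℝ) (R : Finset ι)
    (v : Fin (n + 1) → ℝ) : ℤ :=
  open Classical in (if D.IsTop l R v then 1 else 0) + (if D.IsTop (-l) R v then 1 else 0)

lemma sum_isTop {l : (Fin (n + 1) → ℝ) →ₗ[ℝ] ℝ} (hl : D.Generic l) {S R : Finset ι}
    (hSR : S ⊆ R) (hR : D.IsClique R) :
    (open Classical in ∑ v ∈ D.vertsOn S, if D.IsTop l R v then (1 : ℤ) else 0) = 1 := by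
  obtain ⟨w, hw⟩ := D.exists_isTop hR l
  have hwR := D.mem_vertsOn.1 hw.1
  rw [Finset.sum_eq_single_of_mem w (D.mem_vertsOn.2 ⟨hwR.1, hSR.trans hwR.2⟩), if_pos hw]
  exact fun v _ hv => if_neg fun h => hv (h.unique hl hw)

lemma sum_extr {l : (Fin (n + 1) → ℝ) →ₗ[ℝ] ℝ} (hl : D.Generic l) {S R : Finset ι}
    (hSR : S ⊆ R) (hR : D.IsClique R) : ∑ v ∈ D.vertsOn S, D.extr l R v = 2 := by
  simp only [extr, Finset.sum_add_distrib]
  rw [sum_isTop hl hSR hR, sum_isTop hl.neg hSR hR]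
  norm_num

lemma extr_of_notMem {l : (Fin (n + 1) → ℝ) →ₗ[ℝ] ℝ} {R : Finset ι} {v : Fin (n + 1) → ℝ}
    (h : v ∉ D.vertsOn R) : D.extr l R v = 0 := by
  rw [extr, if_neg fun h' => h h'.1, if_neg fun h' => h h'.1, add_zero]

lemma vertsOn_nonempty {S : Finset ι} (hS : D.IsClique S) : (D.vertsOn S).Nonempty := by
  obtain ⟨v, hv⟩ := D.exists_isTop hS 0
  exact ⟨v, hv.1⟩

lemma mink_of_ideal {v : Fin (n + 1) → ℝ} (hv : v ∈ D.verts) (h0 : mink v v = 0) {i j : ι}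
    (hi : i ∈ D.tight v) (hj : j ∈ D.tight v) (hij : i ≠ j) (h : mink (D.e i) (D.e j) ≠ 0) :
    mink (D.e i) (D.e j) = -1 := by
  obtain ⟨c, -, hc⟩ := exists_add_eq_smul hv h0 hi hj hij h
  have h1 : mink (D.e i + D.e j) (D.e i + D.e j) = 0 := by
    rw [hc, mink_smul_left, mink_smul_right, h0]
    ring
  rw [mink_add_left, mink_add_right, mink_add_right, D.unit, D.unit, mink_comm (D.e j)] at h1
  linarith

variable [DecidableEq ι]

lemma tight_inter_link_finite {v : Fin (n + 1) → ℝ} (hv : v ∈ D.verts) (hf : mink v v < 0)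
    {S : Finset ι} (hS : S ⊆ D.tight v) : D.tight v ∩ D.link S = D.tight v \ S := by
  ext i
  rw [Finset.mem_inter, Finset.mem_sdiff]
  exact ⟨fun h => ⟨h.1, D.notMem_of_mem_link h.2⟩, fun h =>
    ⟨h.1, D.mem_link_of_isClique (isClique_tight hv hf) hS h.1 h.2⟩⟩

lemma card_tight_inter_link_finite {v : Fin (n + 1) → ℝ} (hv : v ∈ D.verts) (hf : mink v v < 0)
    {S : Finset ι} (hS : S ⊆ D.tight v) : (D.tight v ∩ D.link S).card + S.card = n := by
  rw [tight_inter_link_finite hv hf hS, Finset.card_sdiff_add_card_eq_card hS,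
    card_tight_finite hv hf]

lemma card_tight_inter_link_ideal {v : Fin (n + 1) → ℝ} (hv : v ∈ D.verts) (h0 : mink v v = 0)
    {S : Finset ι} (hS : D.IsClique S) (hSv : S ⊆ D.tight v) :
    (D.tight v ∩ D.link S).card + 2 * (S.card + 1) = 2 * n := by
  obtain ⟨H, F, -⟩ := exists_isFrame hv h0 hS hSv (fun _ => True) fun _ _ => Or.inl trivial
  have h := F.sum_tight_inter_link fun _ => 1
  simp only [Finset.sum_const, smul_eq_mul, mul_one] at h
  have := F.card_frame
  omega

lemma mem_vertsOn_insert {S : Finset ι} {k : ι} {v : Fin (n + 1) → ℝ} :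
    v ∈ D.vertsOn (insert k S) ↔ v ∈ D.vertsOn S ∧ k ∈ D.tight v := by
  rw [D.mem_vertsOn, D.mem_vertsOn, Finset.insert_subset_iff]
  tauto

/-- An edge has exactly two vertices. -/
lemma card_vertsOn_edge {E : Finset ι} (hE : D.IsClique E) (hcard : E.card + 1 = n) :
    (D.vertsOn E).card = 2 := by
  obtain ⟨l, hl⟩ := D.exists_generic
  have h1 : ∀ v ∈ D.vertsOn E, D.extr l E v = 1 := by
    intro v hv
    obtain ⟨hv, hEv⟩ := D.mem_vertsOn.1 hv
    by_cases h0 : mink v v = 0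
    · obtain ⟨H, h, F, hloc⟩ := exists_local_ideal hv h0 hE hEv hl
      have hH : H = ∅ := Finset.card_eq_zero.1 (by have := F.card_frame; omega)
      subst hH
      obtain ⟨ht, hb⟩ := hloc ∅ (Finset.Subset.refl _) ∅ (Finset.Subset.refl _)
        (Finset.disjoint_empty_left _)
      simp only [cubeFace, Finset.image_empty, Finset.union_empty, Finset.sdiff_self] at ht hb
      by_cases hh : h ∅ <;> simp [extr, ht, hb, hh]
    · have hf := D.timelike_of_ne_zero hv h0
      obtain ⟨U, hU⟩ := exists_local_finite hv hf hl
      obtain ⟨ht, hb⟩ := hU E hEv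
      obtain ⟨t, htE⟩ : ∃ t, D.tight v \ E = {t} := by
        rw [← Finset.card_eq_one]
        have := Finset.card_sdiff_add_card_eq_card hEv
        rw [card_tight_finite hv hf] at this
        omega
      rw [htE, Finset.singleton_subset_iff] at ht
      rw [htE, Finset.disjoint_singleton_left] at hb
      by_cases hh : t ∈ U <;> simp [extr, ht, hb, hh]
  have h2 := sum_extr hl (Finset.Subset.refl E) hE
  rw [Finset.sum_congr rfl h1, Finset.sum_const, nsmul_one] at h2
  exact_mod_cast h2

section TwoFaces

variable {R : Finset ι}

lemma exists_other_vert (hR : D.IsClique R) (hcard : R.card + 2 = n) {v : Fin (n + 1) → ℝ} {a : ι}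
    (ha : a ∈ D.tight v ∩ D.link R) :
    ∃ w ∈ D.vertsOn R, w ≠ v ∧ a ∈ D.tight w ∩ D.link R := by
  rw [Finset.mem_inter] at ha
  have h2 := card_vertsOn_edge (D.isClique_insert hR ha.2) (by
    rw [Finset.card_insert_of_notMem (D.notMem_of_mem_link ha.2)]
    omega)
  obtain ⟨w, hw, hwv⟩ := Finset.exists_mem_ne (by rw [h2]; norm_num) v
  rw [mem_vertsOn_insert] at hw
  exact ⟨w, hw.1, hwv, Finset.mem_inter.2 ⟨hw.2, ha.2⟩⟩

lemma card_pair (hR : D.IsClique R) (hcard : R.card + 2 = n)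
    {v : Fin (n + 1) → ℝ} (hv : v ∈ D.vertsOn R) :
    (D.tight v ∩ D.link R).card = 2 := by
  obtain ⟨hv, hRv⟩ := D.mem_vertsOn.1 hv
  by_cases h0 : mink v v = 0
  · have := card_tight_inter_link_ideal hv h0 hR hRv
    omega
  · have := card_tight_inter_link_finite hv (D.timelike_of_ne_zero hv h0) hRv
    omega

lemma exists_pair (hR : D.IsClique R) (hcard : R.card + 2 = n)
    {v : Fin (n + 1) → ℝ} (hv : v ∈ D.vertsOn R) {a : ι}
    (ha : a ∈ D.tight v ∩ D.link R) :
    ∃ b, a ≠ b ∧ D.tight v ∩ D.link R = {a, b} := by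
  obtain ⟨x, y, hxy, h⟩ := Finset.card_eq_two.1 (card_pair hR hcard hv)
  rw [h, Finset.mem_insert, Finset.mem_singleton] at ha
  rcases ha with rfl | rfl
  · exact ⟨y, hxy, h⟩
  · exact ⟨x, hxy.symm, by rw [h, Finset.pair_comm]⟩

lemma mink_pair_ideal (hR : D.IsClique R) (hcard : R.card + 2 = n)
    {v : Fin (n + 1) → ℝ} (hv : v ∈ D.idealOn R) {a b : ι} (hab : a ≠ b)
    (hP : D.tight v ∩ D.link R = {a, b}) : mink (D.e a) (D.e b) = -1 := by
  obtain ⟨⟨hv, hRv⟩, h0⟩ := D.mem_idealOn.1 hv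
  have ha : a ∈ D.tight v ∩ D.link R := by rw [hP]; simp
  have hb : b ∈ D.tight v ∩ D.link R := by rw [hP]; simp
  rw [Finset.mem_inter] at ha hb
  refine mink_of_ideal hv h0 ha.1 hb.1 hab fun horth => ?_
  have h := D.isClique_insert (D.isClique_insert hR hb.2) (k := a) (by
    rw [D.mem_link] at ha ⊢
    intro s hs
    rcases Finset.mem_insert.1 hs with rfl | hs
    · exact horth
    · exact ha.2 s hs)
  obtain ⟨M, h1, h2, h3, -, h5⟩ := exists_transversal hv h0 h (Finset.insert_subset ha.1
    (Finset.insert_subset hb.1 hRv)) (fun _ => True) fun _ _ => Or.inl trivial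
  have hM := card_transversal hv h0 h1 h3 h5
  have := Finset.card_le_card h2
  rw [Finset.card_insert_of_notMem, Finset.card_insert_of_notMem (D.notMem_of_mem_link hb.2)]
    at this
  · omega
  · rw [Finset.mem_insert, not_or]
    exact ⟨hab, D.notMem_of_mem_link ha.2⟩

lemma mink_pair_finite {v : Fin (n + 1) → ℝ} (hv : v ∈ D.vertsOn R) (hf : v ∉ D.idealOn R)
    {a b : ι} (hab : a ≠ b) (hP : D.tight v ∩ D.link R = {a, b}) :
    mink (D.e a) (D.e b) = 0 := by
  have hv' := D.mem_vertsOn.1 hv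
  refine isClique_tight hv'.1 (D.timelike_of_ne_zero hv'.1 fun h0 =>
    hf (D.mem_idealOn.2 ⟨hv', h0⟩)) a ?_ b ?_ hab
  · exact Finset.mem_of_mem_inter_left (hP ▸ Finset.mem_insert_self a {b})
  · exact Finset.mem_of_mem_inter_left
      (hP ▸ Finset.mem_insert_of_mem (Finset.mem_singleton_self b))

lemma tight_eq_union {v : Fin (n + 1) → ℝ} (hv : v ∈ D.vertsOn R) (hf : v ∉ D.idealOn R) :
    D.tight v = R ∪ D.tight v ∩ D.link R := by
  have hv' := D.mem_vertsOn.1 hv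
  rw [tight_inter_link_finite hv'.1 (D.timelike_of_ne_zero hv'.1 fun h0 =>
    hf (D.mem_idealOn.2 ⟨hv', h0⟩)) hv'.2, Finset.union_sdiff_of_subset hv'.2]

lemma eq_of_pair_eq (hR : D.IsClique R) (hcard : R.card + 2 = n)
    {v w : Fin (n + 1) → ℝ} (hv : v ∈ D.vertsOn R) (hw : w ∈ D.vertsOn R)
    (h : D.tight v ∩ D.link R = D.tight w ∩ D.link R) : v = w := by
  have hv' := D.mem_vertsOn.1 hv
  have hw' := D.mem_vertsOn.1 hw
  by_cases hvi : v ∈ D.idealOn R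
  · by_cases hwi : w ∈ D.idealOn R
    · obtain ⟨a, b, hab, hP⟩ := Finset.card_eq_two.1 (card_pair hR hcard hv)
      have hab1 := mink_pair_ideal hR hcard hvi hab hP
      have hne : mink (D.e a) (D.e b) ≠ 0 := by rw [hab1]; norm_num
      have ha : a ∈ D.tight v ∩ D.link R := by rw [hP]; simp
      have hb : b ∈ D.tight v ∩ D.link R := by rw [hP]; simp
      obtain ⟨c, hc, h1⟩ := exists_add_eq_smul hv'.1 (D.mem_idealOn.1 hvi).2
        (Finset.mem_inter.1 ha).1 (Finset.mem_inter.1 hb).1 hab hne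
      rw [h] at ha hb
      obtain ⟨d, hd, h2⟩ := exists_add_eq_smul hw'.1 (D.mem_idealOn.1 hwi).2
        (Finset.mem_inter.1 ha).1 (Finset.mem_inter.1 hb).1 hab hne
      rw [h1] at h2
      have h3 := congrFun h2 0
      simp only [Pi.smul_apply, D.apply_zero_of_verts hv'.1, D.apply_zero_of_verts hw'.1,
        smul_eq_mul, mul_one] at h3
      rw [h3] at h2
      exact smul_right_injective _ hd.ne' h2
    · refine D.eq_of_tight_subset hw'.1 hv'.1 ?_
      rw [tight_eq_union hw hwi, ← h]
      exact Finset.union_subset hv'.2 Finset.inter_subset_left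
  · refine (D.eq_of_tight_subset hv'.1 hw'.1 ?_).symm
    rw [tight_eq_union hv hvi, h]
    exact Finset.union_subset hw'.2 Finset.inter_subset_left

lemma exists_decomposition_pair {v : Fin (n + 1) → ℝ} (hv : v ∈ D.vertsOn R)
    (hf : v ∉ D.idealOn R) {a b : ι} (hab : a ≠ b) (hP : D.tight v ∩ D.link R = {a, b}) {k : ι}
    (hk : k ∈ D.link R) (hka : k ≠ a) (hkb : k ≠ b) :
    ∃ α : ℝ, α ≠ 0 ∧ mink (D.e k) v < 0 ∧ D.e k = α • v +
      (mink (D.e a) (D.e k) • D.e a + mink (D.e b) (D.e k) • D.e b) := by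
  have hv' := D.mem_vertsOn.1 hv
  have ht := D.timelike_of_ne_zero hv'.1 fun h0 => hf (D.mem_idealOn.2 ⟨hv', h0⟩)
  have hkv : k ∉ D.tight v := fun h => by
    have : k ∈ D.tight v ∩ D.link R := Finset.mem_inter.2 ⟨h, hk⟩
    rw [hP] at this
    simp [hka, hkb] at this
  have hkneg := D.mink_neg_of_notMem_tight (D.mem_cone_of_verts hv'.1) hkv
  obtain ⟨α, hα⟩ := exists_decomposition_finite hv'.1 ht (D.e k)
  have hdisj : Disjoint R ({a, b} : Finset ι) := Finset.disjoint_right.2 fun t htP =>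
    D.notMem_of_mem_link (Finset.mem_inter.1 (hP ▸ htP)).2
  rw [tight_eq_union hv hf, hP, Finset.sum_union hdisj, Finset.sum_pair hab,
    Finset.sum_eq_zero (s := R) fun s hs => by
      rw [mink_comm, D.mem_link.1 hk s hs, zero_smul], zero_add] at hα
  refine ⟨α, fun h0 => hkneg.ne ?_, hkneg, hα⟩
  have hav : mink (D.e a) v = 0 := D.mem_tight.1
    (Finset.mem_inter.1 (hP ▸ Finset.mem_insert_self a {b})).1
  have hbv : mink (D.e b) v = 0 := D.mem_tight.1 (Finset.mem_inter.1
    (hP ▸ Finset.mem_insert_of_mem (Finset.mem_singleton_self b))).1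
  rw [hα, h0, mink_add_left, mink_add_left, mink_smul_left, mink_smul_left, mink_smul_left, hav,
    hbv]
  ring

/-- A two-dimensional face has at least five vertices, where ideal vertices count twice. -/
lemma five_le_card_two_face (hR : D.IsClique R) (hcard : R.card + 2 = n) :
    5 ≤ (D.vertsOn R).card + (D.idealOn R).card := by
  obtain ⟨v, hv, hvi⟩ : ∃ v ∈ D.vertsOn R, v ∈ D.idealOn R → D.vertsOn R ⊆ D.idealOn R := by
    by_cases h : D.vertsOn R ⊆ D.idealOn R
    · obtain ⟨v, hv⟩ := vertsOn_nonempty hR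
      exact ⟨v, hv, fun _ => h⟩
    · obtain ⟨v, hv, hvi⟩ := Finset.not_subset.1 h
      exact ⟨v, hv, fun h => absurd h hvi⟩
  obtain ⟨a, b, hab, hP⟩ := Finset.card_eq_two.1 (card_pair hR hcard hv)
  obtain ⟨w₁, hw₁, hw₁v, haw₁⟩ := exists_other_vert hR hcard (a := a) (by rw [hP]; simp)
  obtain ⟨w₂, hw₂, hw₂v, hbw₂⟩ := exists_other_vert hR hcard (a := b) (by rw [hP]; simp)
  obtain ⟨c, hac, hP₁⟩ := exists_pair hR hcard hw₁ haw₁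
  obtain ⟨d, hbd, hP₂⟩ := exists_pair hR hcard hw₂ hbw₂
  have hcb : c ≠ b := by
    rintro rfl
    exact hw₁v (eq_of_pair_eq hR hcard hw₁ hv (hP₁.trans hP.symm))
  have hda : d ≠ a := by
    rintro rfl
    exact hw₂v (eq_of_pair_eq hR hcard hw₂ hv (by rw [hP₂, hP, Finset.pair_comm]))
  have hw₁₂ : w₁ ≠ w₂ := by
    rintro rfl
    rw [hP₁] at hP₂
    have : b ∈ ({a, c} : Finset ι) := by rw [hP₂]; simp
    simp only [Finset.mem_insert, Finset.mem_singleton] at this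
    rcases this with h | h
    · exact hab h.symm
    · exact hcb h.symm
  have h3 : ({v, w₁, w₂} : Finset _) ⊆ D.vertsOn R := by
    simp [Finset.insert_subset_iff, -mem_vertsOn, hv, hw₁, hw₂]
  have h3c : ({v, w₁, w₂} : Finset (Fin (n + 1) → ℝ)).card = 3 :=
    Finset.card_eq_three.2 ⟨v, w₁, w₂, hw₁v.symm, hw₂v.symm, hw₁₂, rfl⟩
  have hr3 := Finset.card_le_card h3
  by_cases hvid : v ∈ D.idealOn R
  · have := Finset.card_le_card (hvi hvid)
    omega
  have hclink : c ∈ D.link R :=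
    (Finset.mem_inter.1 (hP₁ ▸ Finset.mem_insert_of_mem (Finset.mem_singleton_self c))).2
  have hdlink : d ∈ D.link R :=
    (Finset.mem_inter.1 (hP₂ ▸ Finset.mem_insert_of_mem (Finset.mem_singleton_self d))).2
  have hvt := D.timelike_of_ne_zero (D.mem_vertsOn.1 hv).1 fun h0 =>
    hvid (D.mem_idealOn.2 ⟨D.mem_vertsOn.1 hv, h0⟩)
  obtain ⟨α, hα, hcv, hcdec⟩ := exists_decomposition_pair hv hvid hab hP hclink hac.symm hcb
  have hav : mink (D.e a) v = 0 := D.mem_tight.1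
    (Finset.mem_inter.1 (hP ▸ Finset.mem_insert_self a {b})).1
  have hbv : mink (D.e b) v = 0 := D.mem_tight.1 (Finset.mem_inter.1
    (hP ▸ Finset.mem_insert_of_mem (Finset.mem_singleton_self b))).1
  by_cases hcd : c = d
  · subst hcd
    have hsq : 1 < mink (D.e a) (D.e c) ^ 2 + mink (D.e b) (D.e c) ^ 2 := by
      have h1 := congrArg (mink (D.e c)) hcdec
      have h2 := congrArg (mink v) hcdec
      rw [D.unit, mink_add_right, mink_add_right, mink_smul_right, mink_smul_right,
        mink_smul_right, mink_comm (D.e c) (D.e a), mink_comm (D.e c) (D.e b)] at h1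
      rw [mink_add_right, mink_add_right, mink_smul_right, mink_smul_right, mink_smul_right,
        mink_comm v (D.e a), mink_comm v (D.e b), mink_comm v (D.e c), hav, hbv] at h2
      have h4 : α * mink (D.e c) v = α ^ 2 * mink v v := by
        rw [h2]
        ring
      have h5 : α ^ 2 * mink v v < 0 := mul_neg_of_pos_of_neg (by positivity) hvt
      linarith
    have hi₁ : w₁ ∈ D.idealOn R := by
      by_contra hf
      rw [mink_pair_finite hw₁ hf hac hP₁] at hsq
      by_cases hi₂ : w₂ ∈ D.idealOn R
      · rw [mink_pair_ideal hR hcard hi₂ hbd hP₂] at hsq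
        norm_num at hsq
      · rw [mink_pair_finite hw₂ hi₂ hbd hP₂] at hsq
        norm_num at hsq
    have hi₂ : w₂ ∈ D.idealOn R := by
      by_contra hf
      rw [mink_pair_finite hw₂ hf hbd hP₂, mink_pair_ideal hR hcard hi₁ hac hP₁] at hsq
      norm_num at hsq
    have h2 := Finset.card_le_card (show ({w₁, w₂} : Finset _) ⊆ D.idealOn R by
      simp [Finset.insert_subset_iff, -mem_idealOn, hi₁, hi₂])
    rw [Finset.card_pair hw₁₂] at h2
    omega
  · obtain ⟨w₃, hw₃, hw₃₁, hcw₃⟩ := exists_other_vert hR hcard (a := c) (by rw [hP₁]; simp)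
    obtain ⟨w₄, hw₄, hw₄₂, hdw₄⟩ := exists_other_vert hR hcard (a := d) (by rw [hP₂]; simp)
    have hw₃v : w₃ ≠ v := by
      rintro rfl
      rw [hP] at hcw₃
      simp [hac.symm, hcb] at hcw₃
    have hw₃₂ : w₃ ≠ w₂ := by
      rintro rfl
      rw [hP₂] at hcw₃
      simp [hcb, hcd] at hcw₃
    have hw₄v : w₄ ≠ v := by
      rintro rfl
      rw [hP] at hdw₄
      simp [hda, hbd.symm] at hdw₄
    have hw₄₁ : w₄ ≠ w₁ := by
      rintro rfl
      rw [hP₁] at hdw₄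
      simp [hda, Ne.symm hcd] at hdw₄
    have h4 : (insert w₃ {v, w₁, w₂} : Finset _) ⊆ D.vertsOn R := Finset.insert_subset hw₃ h3
    have h4c : (insert w₃ {v, w₁, w₂} : Finset (Fin (n + 1) → ℝ)).card = 4 := by
      rw [Finset.card_insert_of_notMem, h3c]
      simp [hw₃v, hw₃₁, hw₃₂]
    have hr4 := Finset.card_le_card h4
    by_cases hm : D.idealOn R = ∅
    · by_cases hw₃₄ : w₄ = w₃
      · exfalso
        subst hw₃₄
        have hno : ∀ w, w ∉ D.idealOn R := by simp [hm, -mem_idealOn]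
        obtain ⟨α', hα', -, hddec⟩ :=
          exists_decomposition_pair hv hvid hab hP hdlink hda hbd.symm
        obtain ⟨d', hcd', hP₃⟩ := exists_pair hR hcard hw₄ hcw₃
        have hdd' : d = d' := by
          rw [hP₃, Finset.mem_insert, Finset.mem_singleton] at hdw₄
          exact hdw₄.resolve_left (Ne.symm hcd)
        subst hdd'
        have horth := mink_pair_finite hw₄ (hno _) hcd' hP₃
        rw [hddec, mink_pair_finite hw₂ (hno _) hbd hP₂, mink_add_right, mink_add_right,
          mink_smul_right, mink_smul_right, mink_smul_right, mink_comm (D.e c) (D.e a),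
          mink_pair_finite hw₁ (hno _) hac hP₁] at horth
        have : α' * mink (D.e c) v = 0 := by linarith
        exact (mul_ne_zero hα' hcv.ne) this
      · have h5 := Finset.card_le_card (Finset.insert_subset hw₄ h4)
        rw [Finset.card_insert_of_notMem (by simp [hw₃₄, hw₄v, hw₄₁, hw₄₂]), h4c] at h5
        omega
    · have := Finset.card_pos.2 (Finset.nonempty_iff_ne_empty.2 hm)
      omega

end TwoFaces

end RightAngledCone

lemma cube_identity {ι : Type*} [DecidableEq ι] {H : Finset ι} (hH : H.card = 4)
    (χ : Finset ι → ℤ) :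
    ∑ j ∈ H, ∑ C ∈ (H.erase j).powerset, ((1 - χ (H \ (H.erase j \ C))) + χ C)
        + 4 * ((1 - χ H) + χ ∅)
      = 20 + 2 * ∑ i ∈ H, (((1 - χ H) + χ {i}) + ((1 - χ (H \ {i})) + χ ∅)) := by
  have hins : ∀ j ∈ H, ∀ C ∈ (H.erase j).powerset, H \ (H.erase j \ C) = insert j C := by
    intro j hj C hC
    rw [Finset.mem_powerset, Finset.subset_erase] at hC
    ext x
    have := @hC.1 x
    by_cases hx : x = j
    · simp [hx, hj]
    · simp only [Finset.mem_sdiff, Finset.mem_erase, Finset.mem_insert]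
      tauto
  rw [Finset.sum_congr rfl fun j hj => Finset.sum_congr rfl fun C hC => by rw [hins j hj C hC]]
  obtain ⟨a, s, has, rfl, hs⟩ := Finset.card_eq_succ.1 hH
  obtain ⟨b, c, d, hbc, hbd, hcd, rfl⟩ := Finset.card_eq_three.1 hs
  simp only [Finset.mem_insert, Finset.mem_singleton, not_or] at has
  obtain ⟨hab, hac, had⟩ := has
  have e1 : ({a, b, c, d} : Finset ι).erase a = {b, c, d} := by grind
  have e2 : ({a, b, c, d} : Finset ι).erase b = {a, c, d} := by grind
  have e3 : ({a, b, c, d} : Finset ι).erase c = {a, b, d} := by grind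
  have e4 : ({a, b, c, d} : Finset ι).erase d = {a, b, c} := by grind
  have hsum : ∀ f : ι → ℤ, ∑ i ∈ ({a, b, c, d} : Finset ι), f i = f a + (f b + (f c + f d)) := by
    intro f
    rw [Finset.sum_insert, Finset.sum_insert, Finset.sum_pair hcd] <;> simp [*]
  have hpow : ∀ x y z : ι, x ≠ y → x ≠ z → y ≠ z → ∀ f : Finset ι → ℤ,
      ∑ C ∈ ({x, y, z} : Finset ι).powerset, f C = f ∅ + f {z} + f {y} + f {y, z} + f {x}
        + f {x, z} + f {x, y} + f {x, y, z} := by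
    intro x y z hxy hxz hyz f
    rw [Finset.sum_powerset_insert (by simp [hxy, hxz]),
      Finset.sum_powerset_insert (by simp [hyz]), Finset.sum_powerset_insert (by simp [hyz])]
    simp only [← insert_empty_eq z, Finset.sum_powerset_insert (Finset.notMem_empty z),
      Finset.powerset_empty, Finset.sum_singleton]
    simp only [insert_empty_eq]
    ring
  simp only [Finset.sdiff_singleton_eq_erase, hsum, e1, e2, e3, e4, hpow b c d hbc hbd hcd,
    hpow a c d hac had hcd, hpow a b d hab had hbd, hpow a b c hab hac hbc, insert_empty_eq]
  simp only [Finset.insert_comm b a, Finset.insert_comm c a, Finset.insert_comm d a,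
    Finset.insert_comm c b, Finset.insert_comm d b, Finset.pair_comm b a,
    Finset.pair_comm c a, Finset.pair_comm d a,
    Finset.pair_comm c b, Finset.pair_comm d b, Finset.pair_comm d c]
  ring

lemma sum_powersetCard_split {ι : Type*} [DecidableEq ι] (X U : Finset ι) (m : ℕ) :
    ∑ Q ∈ X.powersetCard m, ((if Q ⊆ U then (1 : ℤ) else 0) + if Disjoint Q U then 1 else 0)
      = (X ∩ U).card.choose m + (X \ U).card.choose m := by
  have h1 : (X.powersetCard m).filter (fun Q => Q ⊆ U) = (X ∩ U).powersetCard m := by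
    ext Q
    simp only [Finset.mem_filter, Finset.mem_powersetCard, Finset.subset_inter_iff]
    tauto
  have h2 : (X.powersetCard m).filter (fun Q => Disjoint Q U) = (X \ U).powersetCard m := by
    ext Q
    simp only [Finset.mem_filter, Finset.mem_powersetCard, Finset.subset_sdiff]
    tauto
  rw [Finset.sum_add_distrib, Finset.sum_boole, Finset.sum_boole, h1, h2,
    Finset.card_powersetCard, Finset.card_powersetCard]

namespace RightAngledCone

variable {n : ℕ} {ι : Type} {D : RightAngledCone n ι} [Fintype ι] [DecidableEq ι]

/-- The cliques obtained from `S` by adding `m` walls. -/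
def facesAbove (D : RightAngledCone n ι) (S : Finset ι) (m : ℕ) : Finset (Finset ι) :=
  open Classical in Finset.univ.filter fun R => D.IsClique R ∧ S ⊆ R ∧ R.card = S.card + m

lemma mem_facesAbove {S R : Finset ι} {m : ℕ} :
    R ∈ D.facesAbove S m ↔ D.IsClique R ∧ S ⊆ R ∧ R.card = S.card + m := by
  simp [facesAbove]

lemma facesAbove_zero {S : Finset ι} (hS : D.IsClique S) : D.facesAbove S 0 = {S} := by
  ext R
  rw [mem_facesAbove, Finset.mem_singleton]
  constructor
  · rintro ⟨-, h1, h2⟩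
    exact (Finset.eq_of_subset_of_card_le h1 h2.le).symm
  · rintro rfl
    exact ⟨hS, Finset.Subset.refl _, rfl⟩

lemma facesAbove_one {S : Finset ι} (hS : D.IsClique S) :
    D.facesAbove S 1 = (D.link S).image fun i => insert i S := by
  ext R
  rw [mem_facesAbove, Finset.mem_image]
  constructor
  · rintro ⟨h0, h1, h2⟩
    obtain ⟨i, hi⟩ : ∃ i, R \ S = {i} := by
      rw [← Finset.card_eq_one]
      have := Finset.card_sdiff_add_card_eq_card h1
      omega
    have hi' : i ∈ R \ S := by rw [hi]; simp
    rw [Finset.mem_sdiff] at hi'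
    refine ⟨i, D.mem_link_of_isClique h0 h1 hi'.1 hi'.2, ?_⟩
    rw [Finset.insert_eq, ← hi, Finset.sdiff_union_of_subset h1]
  · rintro ⟨i, hi, rfl⟩
    exact ⟨D.isClique_insert hS hi, Finset.subset_insert _ _,
      Finset.card_insert_of_notMem (D.notMem_of_mem_link hi)⟩

lemma insert_injOn_link (S : Finset ι) :
    Set.InjOn (fun i => insert i S) (D.link S : Set ι) := by
  intro i hi j hj h
  have h' : insert i S = insert j S := h
  have : i ∈ insert j S := h' ▸ Finset.mem_insert_self i S
  exact (Finset.mem_insert.1 this).resolve_right (D.notMem_of_mem_link hi)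

lemma sum_facesAbove_one {S : Finset ι} (hS : D.IsClique S) {v : Fin (n + 1) → ℝ}
    (hSv : S ⊆ D.tight v) (f : Finset ι → ℤ) :
    ∑ R ∈ (D.facesAbove S 1).filter (· ⊆ D.tight v), f R =
      ∑ i ∈ D.tight v ∩ D.link S, f (insert i S) := by
  rw [facesAbove_one hS, Finset.filter_image, Finset.sum_image
    ((insert_injOn_link S).mono fun i hi => Finset.mem_of_mem_filter i hi)]
  refine Finset.sum_congr ?_ fun _ _ => rfl
  ext i
  simp only [Finset.mem_filter, Finset.insert_subset_iff, Finset.mem_inter, hSv, and_true]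
  tauto

lemma sum_extr_facesAbove {l : (Fin (n + 1) → ℝ) →ₗ[ℝ] ℝ} (hl : D.Generic l) (S : Finset ι)
    (m : ℕ) : ∑ v ∈ D.vertsOn S, ∑ R ∈ (D.facesAbove S m).filter (· ⊆ D.tight v), D.extr l R v
      = 2 * (D.facesAbove S m).card := by
  have h : ∀ v ∈ D.vertsOn S, ∑ R ∈ (D.facesAbove S m).filter (· ⊆ D.tight v), D.extr l R v
      = ∑ R ∈ D.facesAbove S m, D.extr l R v := by
    intro v _
    rw [Finset.sum_filter]
    refine Finset.sum_congr rfl fun R _ => ?_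
    split_ifs with hR
    · rfl
    · exact (extr_of_notMem fun h => hR (D.mem_vertsOn.1 h).2).symm
  rw [Finset.sum_congr rfl h, Finset.sum_comm, Finset.sum_congr rfl fun R hR =>
    sum_extr hl (mem_facesAbove.1 hR).2.1 (mem_facesAbove.1 hR).1, Finset.sum_const, nsmul_eq_mul,
    mul_comm]

section Finite

variable {v : Fin (n + 1) → ℝ} {S : Finset ι}

lemma sum_facesAbove_finite (hv : v ∈ D.verts) (hf : mink v v < 0) (hS : S ⊆ D.tight v)
    {m d : ℕ} (hd : S.card + (m + d) = n) (f : Finset ι → ℤ) :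
    ∑ R ∈ (D.facesAbove S m).filter (· ⊆ D.tight v), f R =
      ∑ Q ∈ (D.tight v \ S).powersetCard d, f (D.tight v \ Q) := by
  have hT := isClique_tight hv hf
  have hTc := card_tight_finite hv hf
  refine Finset.sum_bij' (fun R _ => D.tight v \ R) (fun Q _ => D.tight v \ Q) ?_ ?_ ?_ ?_ ?_
  · intro R hR
    rw [Finset.mem_filter, mem_facesAbove] at hR
    rw [Finset.mem_powersetCard]
    have := Finset.card_sdiff_add_card_eq_card hR.2
    exact ⟨Finset.sdiff_subset_sdiff (Finset.Subset.refl _) hR.1.2.1, by omega⟩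
  · intro Q hQ
    rw [Finset.mem_powersetCard, Finset.subset_sdiff] at hQ
    rw [Finset.mem_filter, mem_facesAbove]
    have := Finset.card_sdiff_add_card_eq_card hQ.1.1
    exact ⟨⟨hT.subset D Finset.sdiff_subset, Finset.subset_sdiff.2 ⟨hS, hQ.1.2.symm⟩, by omega⟩,
      Finset.sdiff_subset⟩
  · intro R hR
    exact Finset.sdiff_sdiff_eq_self (Finset.mem_filter.1 hR).2
  · intro Q hQ
    exact Finset.sdiff_sdiff_eq_self
      (((Finset.mem_powersetCard.1 hQ).1).trans Finset.sdiff_subset)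
  · intro R hR
    rw [Finset.sdiff_sdiff_eq_self (Finset.mem_filter.1 hR).2]

lemma card_facesAbove_finite (hv : v ∈ D.verts) (hf : mink v v < 0) (hS : S ⊆ D.tight v)
    (hd : S.card + 5 = n) : ((D.facesAbove S 3).filter (· ⊆ D.tight v)).card = 10 := by
  have h := sum_facesAbove_finite hv hf hS (m := 3) (d := 2) hd fun _ => 1
  have hX := Finset.card_sdiff_add_card_eq_card hS
  rw [card_tight_finite hv hf] at hX
  rw [Finset.sum_const, Finset.sum_const, Finset.card_powersetCard,
    show (D.tight v \ S).card = 5 by omega] at h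
  have h' : (((D.facesAbove S 3).filter (· ⊆ D.tight v)).card : ℤ) = 10 := by
    simpa [Nat.choose] using h
  exact_mod_cast h'

lemma local_identity_finite (hv : v ∈ D.verts) (hf : mink v v < 0) (hS : S ⊆ D.tight v)
    (hd : S.card + 5 = n) {l : (Fin (n + 1) → ℝ) →ₗ[ℝ] ℝ} (hl : D.Generic l) :
    ∑ R ∈ (D.facesAbove S 3).filter (· ⊆ D.tight v), D.extr l R v
        + 4 * ∑ R ∈ (D.facesAbove S 0).filter (· ⊆ D.tight v), D.extr l R v
      = 4 + 2 * ∑ R ∈ (D.facesAbove S 1).filter (· ⊆ D.tight v), D.extr l R v := by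
  obtain ⟨U, hU⟩ := exists_local_finite hv hf hl
  set X := D.tight v \ S with hXdef
  have key : ∀ m d, S.card + (m + d) = n →
      ∑ R ∈ (D.facesAbove S m).filter (· ⊆ D.tight v), D.extr l R v
        = (X ∩ U).card.choose d + (X \ U).card.choose d := by
    intro m d hmd
    rw [sum_facesAbove_finite hv hf hS hmd, ← sum_powersetCard_split]
    refine Finset.sum_congr rfl fun Q hQ => ?_
    have hQT : Q ⊆ D.tight v := ((Finset.mem_powersetCard.1 hQ).1).trans Finset.sdiff_subset
    obtain ⟨h1, h2⟩ := hU (D.tight v \ Q) Finset.sdiff_subset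
    rw [Finset.sdiff_sdiff_eq_self hQT] at h1 h2
    simp only [extr, h1, h2]
  rw [key 3 2 hd, key 0 5 hd, key 1 4 hd]
  have hX : X.card + S.card = n := by
    rw [hXdef, Finset.card_sdiff_add_card_eq_card hS, card_tight_finite hv hf]
  have hXU := Finset.card_inter_add_card_sdiff X U
  obtain ⟨k, hk⟩ : ∃ k, (X ∩ U).card = k := ⟨_, rfl⟩
  have hk' : (X \ U).card = 5 - k := by omega
  have hk5 : k ≤ 5 := by omega
  rw [hk, hk']
  interval_cases k <;> norm_num [Nat.choose]

end Finite

section Ideal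

variable {v : Fin (n + 1) → ℝ} {S H : Finset ι}

lemma IsFrame.sum_facesAbove_three (F : D.IsFrame v S H) (hH : H.card = 4) (f : Finset ι → ℤ) :
    ∑ R ∈ (D.facesAbove S 3).filter (· ⊆ D.tight v), f R =
      ∑ j ∈ H, ∑ C ∈ (H.erase j).powerset, f (D.cubeFace v S C (H.erase j \ C)) := by
  have hsub : ∀ {j : ι} {C : Finset ι}, C ∈ (H.erase j).powerset →
      C ⊆ H ∧ H.erase j \ C ⊆ H ∧ Disjoint C (H.erase j \ C) := fun hC =>
    ⟨(Finset.mem_powerset.1 hC).trans (Finset.erase_subset _ _),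
      Finset.sdiff_subset.trans (Finset.erase_subset _ _), Finset.disjoint_sdiff⟩
  rw [Finset.sum_sigma']
  symm
  refine Finset.sum_bij (fun x _ => D.cubeFace v S x.2 (H.erase x.1 \ x.2)) ?_ ?_ ?_ ?_
  · rintro ⟨j, C⟩ hx
    obtain ⟨hj, hC⟩ := Finset.mem_sigma.1 hx
    obtain ⟨h1, h2, h3⟩ := hsub hC
    rw [Finset.mem_filter, mem_facesAbove, F.card_cubeFace h1 h2]
    have := Finset.card_sdiff_add_card_eq_card (Finset.mem_powerset.1 hC)
    have h4 := Finset.card_erase_add_one hj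
    dsimp only at this h4 ⊢
    exact ⟨⟨F.isClique_cubeFace h1 h2 h3, subset_cubeFace, by omega⟩, F.cubeFace_sub h1 h2⟩
  · rintro ⟨j, C⟩ hx ⟨j', C'⟩ hx' heq
    obtain ⟨hj, hC⟩ := Finset.mem_sigma.1 hx
    obtain ⟨hj', hC'⟩ := Finset.mem_sigma.1 hx'
    obtain ⟨h1, h2, h3⟩ := hsub hC
    obtain ⟨h1', h2', h3'⟩ := hsub hC'
    dsimp only at heq h1 h2 h1' h2' hj hj' hC hC'
    have hCC : C = C' := by
      rw [← F.cubeFace_inter_frame h1 h2, heq, F.cubeFace_inter_frame h1' h2']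
    subst hCC
    have hjj : j = j' := by
      by_contra hne
      have hjC : j ∉ C := fun h => Finset.notMem_erase j H (Finset.mem_powerset.1 hC h)
      have h5 : j ∈ H.erase j' \ C :=
        Finset.mem_sdiff.2 ⟨Finset.mem_erase.2 ⟨hne, hj⟩, hjC⟩
      rw [← F.opp_mem_cubeFace_iff h1' h2' hj, ← heq, F.opp_mem_cubeFace_iff h1 h2 hj] at h5
      simp at h5
    rw [hjj]
  · intro R hR
    rw [Finset.mem_filter, mem_facesAbove] at hR
    obtain ⟨⟨hcl, hSR, hcard⟩, hRv⟩ := hR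
    obtain ⟨heq, hdisj⟩ := F.eq_cubeFace hcl hSR hRv
    set A := R ∩ H
    set B := H.filter fun t => D.opp v t ∈ R
    have hA : A ⊆ H := Finset.inter_subset_right
    have hB : B ⊆ H := Finset.filter_subset _ _
    have hAB : A ∪ B ⊆ H := Finset.union_subset hA hB
    have hc := F.card_cubeFace hA hB
    rw [← heq, hcard] at hc
    obtain ⟨j, hj⟩ : ∃ j, H \ (A ∪ B) = {j} := by
      rw [← Finset.card_eq_one]
      have h1 := Finset.card_sdiff_add_card_eq_card hAB
      have h2 := Finset.card_union_of_disjoint hdisj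
      omega
    have hjm : j ∈ H \ (A ∪ B) := by rw [hj]; simp
    rw [Finset.mem_sdiff, Finset.mem_union, not_or] at hjm
    have herase : H.erase j = A ∪ B := by
      rw [← Finset.sdiff_singleton_eq_erase, ← hj, Finset.sdiff_sdiff_eq_self hAB]
    refine ⟨⟨j, A⟩, Finset.mem_sigma.2 ⟨hjm.1, ?_⟩, ?_⟩
    · rw [Finset.mem_powerset, herase]
      exact Finset.subset_union_left
    · dsimp only
      rw [herase, Finset.union_sdiff_cancel_left hdisj, ← heq]
  · intros
    rfl

lemma card_facesAbove_ideal (hv : v ∈ D.verts) (h0 : mink v v = 0) (hS : D.IsClique S)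
    (hSv : S ⊆ D.tight v) (hd : S.card + 5 = n) :
    ((D.facesAbove S 3).filter (· ⊆ D.tight v)).card = 32 := by
  obtain ⟨H, F, -⟩ := exists_isFrame hv h0 hS hSv (fun _ => True) fun _ _ => Or.inl trivial
  have hH : H.card = 4 := by have := F.card_frame; omega
  have h := F.sum_facesAbove_three hH fun _ => 1
  rw [Finset.sum_const, Finset.sum_congr rfl fun j hj => by
    rw [Finset.sum_const, Finset.card_powerset, Finset.card_erase_of_mem hj, hH],
    Finset.sum_const, hH] at h
  have h' : (((D.facesAbove S 3).filter (· ⊆ D.tight v)).card : ℤ) = 32 := by simpa using h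
  exact_mod_cast h'

lemma local_identity_ideal (hv : v ∈ D.verts) (h0 : mink v v = 0) (hS : D.IsClique S)
    (hSv : S ⊆ D.tight v) (hd : S.card + 5 = n) {l : (Fin (n + 1) → ℝ) →ₗ[ℝ] ℝ}
    (hl : D.Generic l) :
    ∑ R ∈ (D.facesAbove S 3).filter (· ⊆ D.tight v), D.extr l R v
        + 4 * ∑ R ∈ (D.facesAbove S 0).filter (· ⊆ D.tight v), D.extr l R v
      = 20 + 2 * ∑ R ∈ (D.facesAbove S 1).filter (· ⊆ D.tight v), D.extr l R v := by
  classical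
  obtain ⟨H, h, F, hloc⟩ := exists_local_ideal hv h0 hS hSv hl
  have hH : H.card = 4 := by have := F.card_frame; omega
  let χ : Finset ι → ℤ := fun C => if h C then 1 else 0
  have hextr : ∀ A ⊆ H, ∀ B ⊆ H, Disjoint A B →
      D.extr l (D.cubeFace v S A B) v = (1 - χ (H \ B)) + χ A := by
    intro A hA B hB hAB
    obtain ⟨h1, h2⟩ := hloc A hA B hB hAB
    simp only [extr, h1, h2, χ]
    congr 1
    by_cases hh : h (H \ B) <;> simp [hh]
  rw [F.sum_facesAbove_three hH, sum_facesAbove_one hS hSv, F.sum_tight_inter_link,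
    facesAbove_zero hS, Finset.filter_singleton, if_pos hSv, Finset.sum_singleton]
  have hS0 : D.extr l S v = (1 - χ H) + χ ∅ := by
    have := hextr ∅ (Finset.empty_subset _) ∅ (Finset.empty_subset _) (Finset.disjoint_empty_left _)
    simpa [cubeFace] using this
  rw [hS0, Finset.sum_congr rfl fun j hj => Finset.sum_congr rfl fun C hC =>
      hextr C ((Finset.mem_powerset.1 hC).trans (Finset.erase_subset _ _)) _
        (Finset.sdiff_subset.trans (Finset.erase_subset _ _)) Finset.disjoint_sdiff,
    cube_identity hH χ]
  congr 2
  refine Finset.sum_congr rfl fun i hi => ?_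
  have hi' : {i} ⊆ H := Finset.singleton_subset_iff.2 hi
  have h1 := hextr {i} hi' ∅ (Finset.empty_subset _) (Finset.disjoint_empty_right _)
  have h2 := hextr ∅ (Finset.empty_subset _) {i} hi' (Finset.disjoint_empty_left _)
  rw [cubeFace, Finset.image_empty, Finset.union_empty, Finset.union_comm, ← Finset.insert_eq,
    Finset.sdiff_empty] at h1
  rw [cubeFace, Finset.image_singleton, Finset.empty_union, Finset.union_comm,
    ← Finset.insert_eq] at h2
  rw [h1, h2]

end Ideal

lemma sum_card_filter (S : Finset ι) (m : ℕ) (V : Finset (Fin (n + 1) → ℝ)) :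
    (open Classical in ∑ R ∈ D.facesAbove S m, (V.filter fun v => R ⊆ D.tight v).card) =
      ∑ v ∈ V, ((D.facesAbove S m).filter (· ⊆ D.tight v)).card := by
  classical
  simp only [Finset.card_filter]
  exact Finset.sum_comm

/-- A five-dimensional face with `f` facets has at least `(5 f - 10) / 7` ideal vertices. -/
lemma five_mul_card_link_le {S : Finset ι} (hS : D.IsClique S) (hd : S.card + 5 = n) :
    5 * (D.link S).card ≤ 7 * (D.idealOn S).card + 10 := by
  classical
  obtain ⟨l, hl⟩ := D.exists_generic
  have hvO : ∀ R ∈ D.facesAbove S 3,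
      D.vertsOn R = (D.vertsOn S).filter fun v => R ⊆ D.tight v := by
    intro R hR
    have := (mem_facesAbove.1 hR).2.1
    ext v
    simp only [mem_vertsOn, Finset.mem_filter]
    exact ⟨fun h => ⟨⟨h.1, this.trans h.2⟩, h.2⟩, fun h => ⟨h.1.1, h.2⟩⟩
  have hiO : ∀ R ∈ D.facesAbove S 3,
      D.idealOn R = (D.idealOn S).filter fun v => R ⊆ D.tight v := by
    intro R hR
    have := (mem_facesAbove.1 hR).2.1
    ext v
    simp only [mem_idealOn, Finset.mem_filter]
    exact ⟨fun h => ⟨⟨⟨h.1.1, this.trans h.1.2⟩, h.2⟩, h.1.2⟩,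
      fun h => ⟨⟨h.1.1.1, h.2⟩, h.1.2⟩⟩
  set fin := (D.vertsOn S).filter fun v => ¬ mink v v = 0 with hfin
  have hid : (D.vertsOn S).filter (fun v => mink v v = 0) = D.idealOn S := by
    ext v
    simp
  have hfm : ∀ v ∈ fin, v ∈ D.verts ∧ mink v v < 0 ∧ S ⊆ D.tight v := by
    intro v hv
    rw [hfin, Finset.mem_filter, mem_vertsOn] at hv
    exact ⟨hv.1.1, D.timelike_of_ne_zero hv.1.1 hv.2, hv.1.2⟩
  have hlow : (D.facesAbove S 3).card * 5 ≤ 10 * fin.card + 64 * (D.idealOn S).card := by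
    calc (D.facesAbove S 3).card * 5
        ≤ ∑ R ∈ D.facesAbove S 3, ((D.vertsOn R).card + (D.idealOn R).card) := by
          rw [← smul_eq_mul]
          refine Finset.card_nsmul_le_sum _ _ _ fun R hR => ?_
          have hR' := mem_facesAbove.1 hR
          exact five_le_card_two_face hR'.1 (by omega)
      _ = ∑ v ∈ D.vertsOn S, ((D.facesAbove S 3).filter (· ⊆ D.tight v)).card
            + ∑ v ∈ D.idealOn S, ((D.facesAbove S 3).filter (· ⊆ D.tight v)).card := by
          rw [Finset.sum_add_distrib, ← sum_card_filter, ← sum_card_filter]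
          congr 1
          · exact Finset.sum_congr rfl fun R hR => by rw [hvO R hR]
          · exact Finset.sum_congr rfl fun R hR => by rw [hiO R hR]
      _ = 10 * fin.card + 64 * (D.idealOn S).card := by
          have h1 : ∑ v ∈ D.idealOn S, ((D.facesAbove S 3).filter (· ⊆ D.tight v)).card
              = (D.idealOn S).card * 32 := Finset.sum_const_nat fun v hv => by
            rw [mem_idealOn] at hv
            exact card_facesAbove_ideal hv.1.1 hv.2 hS hv.1.2 hd
          have h2 : ∑ v ∈ fin, ((D.facesAbove S 3).filter (· ⊆ D.tight v)).card
              = fin.card * 10 := Finset.sum_const_nat fun v hv =>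
            card_facesAbove_finite (hfm v hv).1 (hfm v hv).2.1 (hfm v hv).2.2 hd
          rw [← Finset.sum_filter_add_sum_filter_not (D.vertsOn S) fun v => mink v v = 0, hid, h1,
            h2]
          ring
  have hident : (2 * (D.facesAbove S 3).card + 4 * 2 : ℤ)
      = 4 * fin.card + 20 * (D.idealOn S).card + 2 * (2 * (D.link S).card) := by
    have h3 := sum_extr_facesAbove hl S 3
    have h0 := sum_extr_facesAbove hl S 0
    have h1 := sum_extr_facesAbove hl S 1
    rw [facesAbove_zero hS, Finset.card_singleton, Nat.cast_one, mul_one, ← facesAbove_zero hS]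
      at h0
    rw [facesAbove_one hS, Finset.card_image_of_injOn (insert_injOn_link S), ← facesAbove_one hS]
      at h1
    have hloc : ∀ v ∈ D.vertsOn S,
        ∑ R ∈ (D.facesAbove S 3).filter (· ⊆ D.tight v), D.extr l R v
          + 4 * ∑ R ∈ (D.facesAbove S 0).filter (· ⊆ D.tight v), D.extr l R v
        = (if mink v v = 0 then 20 else 4)
          + 2 * ∑ R ∈ (D.facesAbove S 1).filter (· ⊆ D.tight v), D.extr l R v := by
      intro v hv
      rw [mem_vertsOn] at hv
      split_ifs with h
      · exact local_identity_ideal hv.1 h hS hv.2 hd hl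
      · exact local_identity_finite hv.1 (D.timelike_of_ne_zero hv.1 h) hv.2 hd hl
    have hsum := Finset.sum_congr rfl hloc
    rw [Finset.sum_add_distrib, Finset.sum_add_distrib, ← Finset.mul_sum, ← Finset.mul_sum, h3, h0,
      h1, Finset.sum_ite, Finset.sum_const, Finset.sum_const, hid, nsmul_eq_mul, nsmul_eq_mul]
      at hsum
    linarith
  omega

end RightAngledCone

namespace RightAngledCone

variable {n : ℕ} {ι : Type} {D : RightAngledCone n ι} [Fintype ι] {S : Finset ι}

lemma opp_mem_link {v : Fin (n + 1) → ℝ} (hv : v ∈ D.verts) (h0 : mink v v = 0)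
    (hSv : S ⊆ D.tight v) {i : ι} (hi : i ∈ D.link S) (hiv : i ∈ D.tight v) :
    D.opp v i ∈ D.link S := by
  refine D.mem_link.2 fun s hs => by_contra fun h => ?_
  have := eq_opp hv h0 (opp_mem hv h0 hiv) (hSv hs) (fun hne => ?_) h
  · rw [opp_opp hv h0 hiv] at this
    exact D.notMem_of_mem_link hi (this ▸ hs)
  · rw [← hne] at hs
    exact (opp_spec hv h0 hiv).2.2 (D.mem_link.1 hi _ hs)

variable [DecidableEq ι]

lemma mem_idealOn_insert {k : ι} {v : Fin (n + 1) → ℝ} :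
    v ∈ D.idealOn (insert k S) ↔ v ∈ D.idealOn S ∧ k ∈ D.tight v := by
  rw [D.mem_idealOn, D.mem_idealOn, Finset.insert_subset_iff]
  tauto

lemma opp_injOn_idealOn {i : ι} :
    Set.InjOn (fun v => D.opp v i) (D.idealOn (insert i S) : Set (Fin (n + 1) → ℝ)) := by
  intro v hv w hw h
  have h' : D.opp v i = D.opp w i := h
  rw [Finset.mem_coe, mem_idealOn_insert, D.mem_idealOn] at hv hw
  obtain ⟨c, hc, hcv⟩ := exists_add_opp hv.1.1.1 hv.1.2 hv.2
  obtain ⟨d, hd, hdw⟩ := exists_add_opp hw.1.1.1 hw.1.2 hw.2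
  rw [h', hdw] at hcv
  have hv1 := D.apply_zero_of_verts hv.1.1.1
  have hw1 := D.apply_zero_of_verts hw.1.1.1
  have h0 := congrFun hcv 0
  simp only [Pi.smul_apply, smul_eq_mul, hv1, hw1, mul_one] at h0
  rw [h0] at hcv
  exact (smul_right_injective _ hc.ne' hcv).symm

/-- The walls of a face include a given wall, the walls meeting it, and one parallel wall for
each of its ideal vertices. -/
lemma card_link_insert_le {i : ι} (hi : i ∈ D.link S) :
    1 + (D.link (insert i S)).card + (D.idealOn (insert i S)).card ≤ (D.link S).card := by
  have hsub : D.link (insert i S) ⊆ D.link S := fun k hk =>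
    D.mem_link.2 fun s hs => D.mem_link.1 hk s (Finset.mem_insert_of_mem hs)
  rw [← Finset.card_image_of_injOn opp_injOn_idealOn, add_comm 1,
    ← Finset.card_insert_of_notMem (s := D.link (insert i S)) (a := i)
      fun h => D.notMem_of_mem_link h (Finset.mem_insert_self _ _),
    ← Finset.card_union_of_disjoint]
  · refine Finset.card_le_card (Finset.union_subset (Finset.insert_subset hi hsub) fun k hk => ?_)
    obtain ⟨v, hv, rfl⟩ := Finset.mem_image.1 hk
    rw [mem_idealOn_insert, D.mem_idealOn] at hv
    exact opp_mem_link hv.1.1.1 hv.1.2 hv.1.1.2 hi hv.2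
  · rw [Finset.disjoint_right]
    intro k hk
    obtain ⟨v, hv, rfl⟩ := Finset.mem_image.1 hk
    rw [mem_idealOn_insert, D.mem_idealOn] at hv
    obtain ⟨-, h1, h2⟩ := opp_spec hv.1.1.1 hv.1.2 hv.2
    rw [Finset.mem_insert, not_or]
    exact ⟨h1.symm, fun h =>
      h2 (D.mink_eq_zero_comm.1 (D.mem_link.1 h i (Finset.mem_insert_self _ _)))⟩

lemma sum_card_idealOn_insert (hS : D.IsClique S) {d : ℕ} (hd : S.card + (d + 1) = n) :
    ∑ i ∈ D.link S, (D.idealOn (insert i S)).card = 2 * d * (D.idealOn S).card := by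
  classical
  have h1 : ∀ i ∈ D.link S, (D.idealOn (insert i S)).card
      = ((D.idealOn S).filter fun v => i ∈ D.tight v).card := fun i _ => by
    congr 1
    ext v
    rw [mem_idealOn_insert, Finset.mem_filter]
  rw [Finset.sum_congr rfl h1]
  simp only [Finset.card_filter]
  rw [Finset.sum_comm, mul_comm]
  refine Finset.sum_const_nat fun v hv => ?_
  rw [← Finset.card_filter, Finset.filter_mem_eq_inter, Finset.inter_comm]
  rw [D.mem_idealOn] at hv
  have := card_tight_inter_link_ideal hv.1.1 hv.2 hS hv.1.2
  omega

lemma le_card_link (hS : D.IsClique S) {d : ℕ} (hd : S.card + (d + 1) = n) (hd1 : 1 ≤ d) :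
    d + 1 ≤ (D.link S).card := by
  obtain ⟨v, hv⟩ := vertsOn_nonempty hS
  rw [D.mem_vertsOn] at hv
  have hle := Finset.card_le_card (Finset.inter_subset_right (s₁ := D.tight v) (s₂ := D.link S))
  by_cases h0 : mink v v = 0
  · have := card_tight_inter_link_ideal hv.1 h0 hS hv.2
    omega
  · have := card_tight_inter_link_finite hv.1 (D.timelike_of_ne_zero hv.1 h0) hv.2
    omega

lemma le_card_link_of_ideal (hS : D.IsClique S) {d : ℕ} (hd : S.card + (d + 1) = n)
    (h : (D.idealOn S).Nonempty) : 2 * d ≤ (D.link S).card := by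
  obtain ⟨v, hv⟩ := h
  rw [D.mem_idealOn] at hv
  have hle := Finset.card_le_card (Finset.inter_subset_right (s₁ := D.tight v) (s₂ := D.link S))
  have := card_tight_inter_link_ideal hv.1.1 hv.2 hS hv.1.2
  omega

/-- All `d`-dimensional faces have at least `a` facets and `b` ideal vertices. -/
def FacesAtLeast (D : RightAngledCone n ι) (d a b : ℕ) : Prop :=
  ∀ S, D.IsClique S → S.card + d = n → a ≤ (D.link S).card ∧ b ≤ (D.idealOn S).card

lemma facesAtLeast_five : D.FacesAtLeast 5 11 7 := by
  intro S hS hd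
  have h1 := five_mul_card_link_le hS hd
  have h2 := le_card_link hS (d := 4) hd (by norm_num)
  have hne : (D.idealOn S).Nonempty := Finset.card_pos.1 (by omega)
  have h3 := le_card_link_of_ideal hS (d := 4) hd hne
  have h4 : 11 ≤ (D.link S).card := by
    by_contra! hlt
    obtain ⟨i, hi, hi5⟩ : ∃ i ∈ D.link S, 4 < (D.idealOn (insert i S)).card := by
      refine Finset.exists_lt_of_sum_lt ?_
      rw [sum_card_idealOn_insert hS (d := 4) hd, Finset.sum_const, smul_eq_mul]
      omega
    have h5 := card_link_insert_le hi
    have h6 := le_card_link_of_ideal (D.isClique_insert hS hi) (d := 3)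
      (by rw [Finset.card_insert_of_notMem (D.notMem_of_mem_link hi)]; omega)
      (Finset.card_pos.1 (by omega))
    omega
  omega

lemma FacesAtLeast.succ {d a b a' b' : ℕ} (h : D.FacesAtLeast d a b) (hd : 1 ≤ d)
    (ha : a' ≤ 1 + a + b) (hb : 2 * d * b' < (1 + a + b) * b + 2 * d) :
    D.FacesAtLeast (d + 1) a' b' := by
  intro S hS hSd
  have hins : ∀ i ∈ D.link S,
      a ≤ (D.link (insert i S)).card ∧ b ≤ (D.idealOn (insert i S)).card := fun i hi =>
    h _ (D.isClique_insert hS hi)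
      (by rw [Finset.card_insert_of_notMem (D.notMem_of_mem_link hi)]; omega)
  obtain ⟨i, hi⟩ : (D.link S).Nonempty :=
    Finset.card_pos.1 (by have := le_card_link hS hSd hd; omega)
  have hlink : 1 + a + b ≤ (D.link S).card := by
    have := card_link_insert_le hi
    have := hins i hi
    omega
  refine ⟨ha.trans hlink, ?_⟩
  have hsum : (1 + a + b) * b ≤ 2 * d * (D.idealOn S).card := by
    rw [← sum_card_idealOn_insert hS hSd]
    calc (1 + a + b) * b ≤ (D.link S).card * b := Nat.mul_le_mul_right _ hlink
      _ = (D.link S).card • b := by rw [smul_eq_mul]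
      _ ≤ _ := Finset.card_nsmul_le_sum _ _ _ fun i hi => (hins i hi).2
  have : 2 * d * b' < 2 * d * ((D.idealOn S).card + 1) := by
    rw [mul_add, mul_one]
    omega
  exact Nat.lt_succ_iff.1 (Nat.lt_of_mul_lt_mul_left this)

/-- A right-angled cone of dimension between `5` and `12` has many ideal vertices. -/
theorem idealVertexBound_le (hn : 5 ≤ n) (hn' : n ≤ 12) :
    idealVertexBound n ≤ (D.idealOn ∅).card := by
  have h5 : D.FacesAtLeast 5 11 7 := facesAtLeast_five
  have h6 : D.FacesAtLeast 6 19 14 := h5.succ (by norm_num) (by norm_num) (by norm_num)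
  have h7 : D.FacesAtLeast 7 34 40 := h6.succ (by norm_num) (by norm_num) (by norm_num)
  have h8 : D.FacesAtLeast 8 75 215 := h7.succ (by norm_num) (by norm_num) (by norm_num)
  have h9 : D.FacesAtLeast 9 291 3911 := h8.succ (by norm_num) (by norm_num) (by norm_num)
  have h10 : D.FacesAtLeast 10 4203 913219 :=
    h9.succ (by norm_num) (by norm_num) (by norm_num)
  have h11 : D.FacesAtLeast 11 917423 41890405732 :=
    h10.succ (by norm_num) (by norm_num) (by norm_num)
  have h12 : D.FacesAtLeast 12 0 127466960740760088 :=
    h11.succ (by norm_num) (by norm_num) (by norm_num)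
  have hcl : D.IsClique ∅ := fun i hi => absurd hi (Finset.notMem_empty i)
  have key : ∀ {a b : ℕ}, D.FacesAtLeast n a b → b ≤ (D.idealOn ∅).card := fun h =>
    (h ∅ hcl (by simp)).2
  interval_cases n
  · exact le_trans (by decide) (key h5)
  · exact le_trans (by decide) (key h6)
  · exact le_trans (by decide) (key h7)
  · exact le_trans (by decide) (key h8)
  · exact le_trans (by simp [idealVertexBound]) (key h9)
  · exact le_trans (by simp [idealVertexBound]) (key h10)
  · exact le_trans (by simp [idealVertexBound]) (key h11)
  · exact le_trans (by simp [idealVertexBound]) (key h12)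

end RightAngledCone

/-- A finite system of linear inequalities on a subspace with a strict solution contains an
equivalent subsystem each member of which is the only equality at some solution. -/
lemma exists_irredundant {κ M : Type*} [AddCommGroup M] [Module ℝ M] (f : κ → M →ₗ[ℝ] ℝ)
    (V : Submodule ℝ M) (A : Finset κ) {p : M} (hpV : p ∈ V) (hp : ∀ k ∈ A, f k p < 0) :
    ∃ J ⊆ A, (∀ x ∈ V, (∀ k ∈ J, f k x ≤ 0) → ∀ k ∈ A, f k x ≤ 0) ∧
      ∀ k ∈ J, ∃ z ∈ V, f k z = 0 ∧ ∀ l ∈ J, l ≠ k → f l z < 0 := by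
  classical
  obtain ⟨J, hJ, hmin⟩ := Finset.exists_min_image
    (A.powerset.filter fun J => ∀ x ∈ V, (∀ k ∈ J, f k x ≤ 0) → ∀ k ∈ A, f k x ≤ 0) Finset.card
    ⟨A, by simp⟩
  simp only [Finset.mem_filter, Finset.mem_powerset] at hJ hmin
  refine ⟨J, hJ.1, hJ.2, fun k hk => ?_⟩
  have hfail : ∃ y ∈ V, (∀ l ∈ J.erase k, f l y ≤ 0) ∧ 0 < f k y := by
    by_contra! hcon
    have := hmin (J.erase k) ⟨(Finset.erase_subset _ _).trans hJ.1, fun x hx h =>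
      hJ.2 x hx fun l hl => by
        by_cases hlk : l = k
        · exact hlk ▸ hcon x hx h
        · exact h l (Finset.mem_erase.2 ⟨hlk, hl⟩)⟩
    exact absurd this (not_le.2 (Finset.card_erase_lt_of_mem hk))
  obtain ⟨y, hyV, hy, hky⟩ := hfail
  refine ⟨f k y • p - f k p • y, V.sub_mem (V.smul_mem _ hpV) (V.smul_mem _ hyV), ?_, ?_⟩
  · simp only [map_sub, map_smul, smul_eq_mul]
    ring
  · intro l hl hlk
    simp only [map_sub, map_smul, smul_eq_mul]
    nlinarith [mul_neg_of_pos_of_neg hky (hp l (hJ.1 hl)),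
      mul_nonneg_of_nonpos_of_nonpos (hp k (hJ.1 hk)).le (hy l (Finset.mem_erase.2 ⟨hlk, hl⟩))]

section Klein

variable {n : ℕ}

/-- The point of Minkowski space at height one over a point of the Klein model. -/
def kleinLift (p : EuclideanSpace ℝ (Fin n)) : Fin (n + 1) → ℝ := Fin.cons 1 fun i => p i

/-- The spatial part of a vector of Minkowski space. -/
def spatial (x : Fin (n + 1) → ℝ) : EuclideanSpace ℝ (Fin n) := WithLp.toLp 2 fun i => x i.succ

@[simp] lemma kleinLift_zero (p : EuclideanSpace ℝ (Fin n)) : kleinLift p 0 = 1 := rfl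

@[simp] lemma kleinLift_succ (p : EuclideanSpace ℝ (Fin n)) (i : Fin n) :
    kleinLift p i.succ = p i := rfl

@[simp] lemma spatial_apply (x : Fin (n + 1) → ℝ) (i : Fin n) : spatial x i = x i.succ := rfl

lemma mink_kleinLift (e : Fin (n + 1) → ℝ) (p : EuclideanSpace ℝ (Fin n)) :
    mink e (kleinLift p) = inner ℝ (spatial e) p - e 0 := by
  simp only [mink, kleinLift_zero, kleinLift_succ, PiLp.inner_apply, spatial_apply,
    RCLike.inner_apply, conj_trivial]
  rw [Finset.sum_congr rfl fun i _ => mul_comm (e i.succ) (p i)]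
  ring

lemma mink_eq_inner (x y : Fin (n + 1) → ℝ) :
    mink x y = inner ℝ (spatial x) (spatial y) - x 0 * y 0 := by
  simp only [mink, PiLp.inner_apply, spatial_apply, RCLike.inner_apply, conj_trivial]
  rw [Finset.sum_congr rfl fun i _ => mul_comm (x i.succ) (y i.succ)]
  ring

lemma mink_kleinLift_self (p : EuclideanSpace ℝ (Fin n)) :
    mink (kleinLift p) (kleinLift p) = ‖p‖ ^ 2 - 1 := by
  rw [mink_kleinLift, kleinLift_zero, ← real_inner_self_eq_norm_sq]
  rfl

lemma kleinMap_kleinLift (p : EuclideanSpace ℝ (Fin n)) {c : ℝ} (hc : c ≠ 0) :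
    kleinMap (c • kleinLift p) = p := by
  ext i
  simp [kleinMap, hc]

lemma smul_kleinLift_kleinMap {x : Fin (n + 1) → ℝ} (hx : x 0 ≠ 0) :
    x 0 • kleinLift (kleinMap x) = x := by
  funext i
  refine Fin.cases ?_ (fun i => ?_) i
  · simp
  · simp only [Pi.smul_apply, kleinLift_succ, kleinMap, smul_eq_mul]
    field_simp

lemma mink_eq_zero_iff_kleinLift {e x : Fin (n + 1) → ℝ} (hx : 0 < x 0) :
    mink e (kleinLift (kleinMap x)) = 0 ↔ mink e x = 0 := by
  conv_rhs => rw [← smul_kleinLift_kleinMap hx.ne', mink_smul_right]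
  simp [hx.ne']

lemma mink_kleinLift_nonpos_iff {e x : Fin (n + 1) → ℝ} (hx : 0 < x 0) :
    mink e (kleinLift (kleinMap x)) ≤ 0 ↔ mink e x ≤ 0 := by
  conv_rhs => rw [← smul_kleinLift_kleinMap hx.ne', mink_smul_right]
  exact ⟨fun h => mul_nonpos_of_nonneg_of_nonpos hx.le h, fun h => nonpos_of_mul_nonpos_right h hx⟩

lemma continuous_mink (e : Fin (n + 1) → ℝ) : Continuous (mink e) := by
  unfold mink
  fun_prop

lemma isClosed_lightCone : IsClosed {x : Fin (n + 1) → ℝ | mink x x ≤ 0 ∧ 0 ≤ x 0} := by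
  have h : Continuous fun x : Fin (n + 1) → ℝ => mink x x := by
    unfold mink
    fun_prop
  exact (isClosed_le h continuous_const).and (isClosed_le continuous_const (continuous_apply 0))

end Klein

namespace HypPolyhedron

variable {n : ℕ} (P : HypPolyhedron n)

lemma image_carrier : kleinMap '' P.carrier =
    {p | ‖p‖ < 1 ∧ ∀ i, mink (P.e i) (kleinLift p) ≤ 0} := by
  ext p
  constructor
  · rintro ⟨x, ⟨⟨h1, h0⟩, h⟩, rfl⟩
    refine ⟨?_, fun i => (mink_kleinLift_nonpos_iff h0).2 (h i)⟩
    have h2 : mink (x 0 • kleinLift (kleinMap x)) (x 0 • kleinLift (kleinMap x)) = -1 := by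
      rw [smul_kleinLift_kleinMap h0.ne', h1]
    rw [mink_smul_left, mink_smul_right, mink_kleinLift_self] at h2
    have h3 : 0 < x 0 * x 0 := mul_pos h0 h0
    have h4 : ‖kleinMap x‖ ^ 2 < 1 := by nlinarith
    nlinarith [norm_nonneg (kleinMap x)]
  · rintro ⟨hp, h⟩
    have hpos : 0 < 1 - ‖p‖ ^ 2 := by nlinarith [norm_nonneg p]
    set c := (Real.sqrt (1 - ‖p‖ ^ 2))⁻¹ with hc
    have hc0 : 0 < c := inv_pos.2 (Real.sqrt_pos.2 hpos)
    refine ⟨c • kleinLift p, ⟨⟨?_, ?_⟩, fun i => ?_⟩, kleinMap_kleinLift p hc0.ne'⟩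
    · have : c * c * (1 - ‖p‖ ^ 2) = 1 := by
        rw [hc, ← mul_inv, Real.mul_self_sqrt hpos.le, inv_mul_cancel₀ hpos.ne']
      rw [mink_smul_left, mink_smul_right, mink_kleinLift_self]
      linarith
    · simpa using hc0
    · rw [mink_smul_right]
      exact mul_nonpos_of_nonneg_of_nonpos hc0.le (h i)

lemma spatial_ne_zero (i : Fin P.m) : spatial (P.e i) ≠ 0 := fun h => by
  have := P.unit i
  rw [mink_eq_inner, h, inner_zero_left] at this
  nlinarith [mul_self_nonneg (P.e i 0)]

lemma exists_interior_point :
    ∃ q : EuclideanSpace ℝ (Fin n), ‖q‖ < 1 ∧ ∀ i, mink (P.e i) (kleinLift q) < 0 := by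
  obtain ⟨q, hq⟩ := P.nonempty_int
  change q ∈ interior (kleinMap '' P.carrier) at hq
  rw [P.image_carrier] at hq
  obtain ⟨h1, h2⟩ := interior_subset hq
  refine ⟨q, h1, fun i => lt_of_le_of_ne (h2 i) fun h0 => ?_⟩
  have hcont : Filter.Tendsto (fun t : ℝ => q + t • spatial (P.e i)) (nhdsWithin 0 (Set.Ioi 0))
      (nhds q) := by
    have : ContinuousAt (fun t : ℝ => q + t • spatial (P.e i)) 0 := by fun_prop
    have h := this.tendsto
    simp only [zero_smul, add_zero] at h
    exact h.mono_left nhdsWithin_le_nhds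
  obtain ⟨t, ht, ht0⟩ :=
    ((hcont.eventually (mem_interior_iff_mem_nhds.1 hq)).and self_mem_nhdsWithin).exists
  have := ht.2 i
  rw [mink_kleinLift] at this h0
  rw [inner_add_right, inner_smul_right] at this
  have hpos : 0 < t * inner ℝ (spatial (P.e i)) (spatial (P.e i)) :=
    mul_pos ht0 (real_inner_self_pos.2 (P.spatial_ne_zero i))
  linarith

lemma mem_cl {p : EuclideanSpace ℝ (Fin n)} :
    p ∈ P.cl ↔ ‖p‖ ≤ 1 ∧ ∀ i, mink (P.e i) (kleinLift p) ≤ 0 := by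
  rw [cl, P.image_carrier]
  constructor
  · intro hp
    have hcl : IsClosed {p : EuclideanSpace ℝ (Fin n) |
        ‖p‖ ≤ 1 ∧ ∀ i, mink (P.e i) (kleinLift p) ≤ 0} := by
      refine (isClosed_le continuous_norm continuous_const).and ?_
      simp only [Set.ofPred_forall, mink_kleinLift]
      exact isClosed_iInter fun i => isClosed_le (by fun_prop) continuous_const
    refine closure_minimal (fun p hp => ?_) hcl hp
    exact ⟨hp.1.le, hp.2⟩
  · rintro ⟨h1, h2⟩
    obtain ⟨q, hq1, hq2⟩ := P.exists_interior_point
    have hcont : Filter.Tendsto (fun t : ℝ => (1 - t) • p + t • q) (nhdsWithin 0 (Set.Ioi 0))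
        (nhds p) := by
      have : ContinuousAt (fun t : ℝ => (1 - t) • p + t • q) 0 := by fun_prop
      have h := this.tendsto
      simp only [sub_zero, one_smul, zero_smul, add_zero] at h
      exact h.mono_left nhdsWithin_le_nhds
    refine mem_closure_of_tendsto hcont ?_
    filter_upwards [Ioo_mem_nhdsGT one_pos] with t ht
    refine ⟨?_, fun i => ?_⟩
    · calc ‖(1 - t) • p + t • q‖ ≤ ‖(1 - t) • p‖ + ‖t • q‖ := norm_add_le _ _
        _ = (1 - t) * ‖p‖ + t * ‖q‖ := by
          rw [norm_smul, norm_smul, Real.norm_of_nonneg ht.1.le,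
            Real.norm_of_nonneg (sub_nonneg.2 ht.2.le)]
        _ < 1 := by nlinarith [ht.1, ht.2]
    · have h3 := h2 i
      have h4 := hq2 i
      rw [mink_kleinLift] at h3 h4 ⊢
      rw [inner_add_right, inner_smul_right, inner_smul_right]
      nlinarith [ht.1, ht.2]

lemma mem_verts_of_norm_eq_one {p : EuclideanSpace ℝ (Fin n)} (hp : p ∈ P.cl) (h : ‖p‖ = 1) :
    p ∈ P.verts := by
  intro _
  refine ⟨innerSL ℝ p, ?_⟩
  have hpp : inner ℝ p p = (1 : ℝ) := by rw [real_inner_self_eq_norm_sq, h, one_pow]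
  ext x
  simp only [Set.mem_singleton_iff, Set.mem_ofPred_eq, innerSL_apply_apply]
  constructor
  · rintro rfl
    refine ⟨hp, fun y hy => ?_⟩
    have := real_inner_le_norm x y
    rw [h, one_mul] at this
    rw [hpp]
    exact this.trans (P.mem_cl.1 hy).1
  · rintro ⟨hx, hmax⟩
    have h1 := hmax p hp
    have h2 := norm_sub_sq_real p x
    have h3 := (P.mem_cl.1 hx).1
    have h4 : ‖p - x‖ ^ 2 ≤ 0 := by
      rw [h2, h]
      nlinarith [norm_nonneg x]
    have h5 : ‖p - x‖ = 0 := by nlinarith [norm_nonneg (p - x)]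
    exact (sub_eq_zero.1 (norm_eq_zero.1 h5)).symm

/-- The linear cone cut out by the half-spaces of the polyhedron. -/
def linCone : Set (Fin (n + 1) → ℝ) := {x | ∀ i, mink (P.e i) x ≤ 0}

lemma kleinMap_mem_cl {x : Fin (n + 1) → ℝ} (hx : x ∈ P.linCone) (h : mink x x ≤ 0)
    (h0 : 0 < x 0) : kleinMap x ∈ P.cl := by
  refine P.mem_cl.2 ⟨?_, fun i => (mink_kleinLift_nonpos_iff h0).2 (hx i)⟩
  rw [← smul_kleinLift_kleinMap h0.ne', mink_smul_left, mink_smul_right, mink_kleinLift_self] at h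
  have h3 : 0 < x 0 * x 0 := mul_pos h0 h0
  have h4 : ‖kleinMap x‖ ^ 2 ≤ 1 := by nlinarith
  nlinarith [norm_nonneg (kleinMap x)]

lemma kleinMap_mem_idealVerts {x : Fin (n + 1) → ℝ} (hx : x ∈ P.linCone) (h : mink x x = 0)
    (h0 : 0 < x 0) : kleinMap x ∈ P.idealVerts := by
  have hcl := P.kleinMap_mem_cl hx h.le h0
  have hnorm : ‖kleinMap x‖ = 1 := by
    rw [← smul_kleinLift_kleinMap h0.ne', mink_smul_left, mink_smul_right,
      mink_kleinLift_self] at h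
    have h4 : ‖kleinMap x‖ ^ 2 - 1 = 0 := by
      simpa [h0.ne'] using h
    nlinarith [norm_nonneg (kleinMap x)]
  exact ⟨P.mem_verts_of_norm_eq_one hcl hnorm, hnorm⟩

end HypPolyhedron

namespace HypPolyhedron

variable {n : ℕ} (P : HypPolyhedron n)

lemma add_mem_linCone {x y : Fin (n + 1) → ℝ} (hx : x ∈ P.linCone) (hy : y ∈ P.linCone) :
    x + y ∈ P.linCone := fun i => by
  rw [mink_add_right]
  exact add_nonpos (hx i) (hy i)

lemma smul_mem_linCone {x : Fin (n + 1) → ℝ} (hx : x ∈ P.linCone) {c : ℝ} (hc : 0 ≤ c) :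
    c • x ∈ P.linCone := fun i => by
  rw [mink_smul_right]
  exact mul_nonpos_of_nonneg_of_nonpos hc (hx i)

/-- A ray pointing out of the light cone hits its boundary. -/
lemma exists_exit {x y : Fin (n + 1) → ℝ} (hx : ¬ (mink x x ≤ 0 ∧ 0 ≤ x 0)) (hy : mink y y < 0)
    (hy0 : 0 < y 0) : ∃ t : ℝ, 0 ≤ t ∧ mink (y + t • x) (y + t • x) = 0 ∧ 0 ≤ (y + t • x) 0 := by
  set L : Set (Fin (n + 1) → ℝ) := {x | mink x x ≤ 0 ∧ 0 ≤ x 0} with hL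
  have hLc : IsClosed L := isClosed_lightCone
  have hγ : Continuous fun t : ℝ => y + t • x := by fun_prop
  obtain ⟨T, hT, hTL⟩ : ∃ T : ℝ, 0 < T ∧ y + T • x ∉ L := by
    by_contra! hcon
    refine hx (?_ : x ∈ L)
    have hlim : Filter.Tendsto (fun s : ℝ => s • y + x) (nhdsWithin 0 (Set.Ioi 0)) (nhds x) := by
      have : ContinuousAt (fun s : ℝ => s • y + x) 0 := by fun_prop
      have h := this.tendsto
      simp only [zero_smul, zero_add] at h
      exact h.mono_left nhdsWithin_le_nhds
    refine hLc.mem_of_tendsto hlim ?_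
    filter_upwards [self_mem_nhdsWithin] with s hs
    have hs' : 0 < s := hs
    obtain ⟨h1, h2⟩ := hcon s⁻¹ (inv_pos.2 hs')
    have heq : s • y + x = s • (y + s⁻¹ • x) := by
      rw [smul_add, smul_smul, mul_inv_cancel₀ hs'.ne', one_smul]
    rw [heq]
    refine ⟨?_, ?_⟩
    · rw [mink_smul_left, mink_smul_right]
      exact mul_nonpos_of_nonneg_of_nonpos hs'.le (mul_nonpos_of_nonneg_of_nonpos hs'.le h1)
    · exact mul_nonneg hs'.le h2
  have hcomp : IsCompact (Set.Icc 0 T ∩ (fun t : ℝ => y + t • x) ⁻¹' L) :=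
    isCompact_Icc.inter_right (hLc.preimage hγ)
  obtain ⟨t, ⟨ht, htL⟩, hmax⟩ := hcomp.exists_isMaxOn
    ⟨0, ⟨le_refl _, hT.le⟩, by simpa [hL] using ⟨hy.le, hy0.le⟩⟩ continuousOn_id
  have htL' : mink (y + t • x) (y + t • x) ≤ 0 ∧ 0 ≤ (y + t • x) 0 := htL
  refine ⟨t, ht.1, le_antisymm htL'.1 (not_lt.1 fun hneg => ?_), htL'.2⟩
  have hpos : 0 < (y + t • x) 0 := lt_of_le_of_ne htL'.2 fun h0 =>
    absurd (mink_self_nonneg_of_zero h0.symm) (not_le.2 hneg)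
  have htT : t < T := lt_of_le_of_ne ht.2 fun h => hTL (h ▸ htL)
  have hq : Continuous fun t : ℝ => mink (y + t • x) (y + t • x) := by
    unfold mink
    fun_prop
  have h1 : ∀ᶠ s in nhdsWithin t (Set.Ioi t), mink (y + s • x) (y + s • x) < 0 :=
    nhdsWithin_le_nhds (hq.continuousAt.eventually_lt continuousAt_const hneg)
  have h2 : ∀ᶠ s in nhdsWithin t (Set.Ioi t), 0 < (y + s • x) 0 :=
    nhdsWithin_le_nhds (continuousAt_const.eventually_lt
      ((continuous_apply 0).comp hγ).continuousAt hpos)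
  obtain ⟨s, hs1, hs2, hs3⟩ := (h1.and (h2.and (Ioo_mem_nhdsGT htT))).exists
  have := hmax (⟨⟨ht.1.trans hs3.1.le, hs3.2.le⟩, hs1.le, hs2.le⟩ :
    s ∈ Set.Icc 0 T ∩ (fun t : ℝ => y + t • x) ⁻¹' L)
  exact absurd this (not_le.2 hs3.1)

lemma exists_notMem_span (hn : 2 ≤ n) {Z : Set (Fin (n + 1) → ℝ)} (hZ : Z.Finite)
    (x : Fin (n + 1) → ℝ) : ∃ u, ∀ z ∈ Z, u ∉ Submodule.span ℝ {z, x} := by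
  classical
  by_contra! hcon
  have := Subspace.biUnion_ne_univ_of_top_notMem
    (s := hZ.toFinset.image fun z => Submodule.span ℝ {z, x}) ?_
  · refine this (Set.eq_univ_of_forall fun u => ?_)
    obtain ⟨z, hz, hu⟩ := hcon u
    simp only [Set.mem_iUnion]
    exact ⟨_, Finset.mem_image_of_mem _ (hZ.mem_toFinset.2 hz), hu⟩
  · intro h
    obtain ⟨z, -, hz⟩ := Finset.mem_image.1 h
    have h1 := finrank_span_finset_le_card (R := ℝ) ({z, x} : Finset (Fin (n + 1) → ℝ))
    rw [Finset.coe_pair, Set.finrank, hz, finrank_top, Module.finrank_fin_fun] at h1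
    have := h1.trans Finset.card_le_two
    omega

/-- The cone over a polyhedron with finitely many vertices lies in the light cone. -/
lemma causal (hn : 2 ≤ n) (hfin : P.verts.Finite) {x : Fin (n + 1) → ℝ} (hx : x ∈ P.linCone) :
    mink x x ≤ 0 ∧ 0 ≤ x 0 := by
  by_contra hxL
  obtain ⟨q, hq1, hq⟩ := P.exists_interior_point
  have hZ : (insert 0 (kleinLift '' P.verts)).Finite := (hfin.image _).insert 0
  obtain ⟨u, hu⟩ := exists_notMem_span hn hZ x
  have hγ : Continuous fun s : ℝ => kleinLift q + s • u := by fun_prop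
  have hev : ∀ᶠ s in nhds (0 : ℝ), kleinLift q + s • u ∈ P.linCone ∧
      mink (kleinLift q + s • u) (kleinLift q + s • u) < 0 ∧ 0 < (kleinLift q + s • u) 0 := by
    refine Filter.Eventually.and ?_ (Filter.Eventually.and ?_ ?_)
    · have : ∀ᶠ s in nhds (0 : ℝ), ∀ i, mink (P.e i) (kleinLift q + s • u) < 0 :=
        Filter.eventually_all.2 fun i =>
          ((continuous_mink _).comp hγ).continuousAt.eventually_lt continuousAt_const
            (by simpa using hq i)
      exact this.mono fun s hs i => (hs i).le
    · have h : Continuous fun s : ℝ => mink (kleinLift q + s • u) (kleinLift q + s • u) := by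
        unfold mink
        fun_prop
      refine h.continuousAt.eventually_lt continuousAt_const ?_
      rw [zero_smul, add_zero, mink_kleinLift_self]
      nlinarith [norm_nonneg q]
    · exact continuousAt_const.eventually_lt ((continuous_apply 0).comp hγ).continuousAt
        (by simp)
  obtain ⟨ε, hε, hball⟩ := Metric.eventually_nhds_iff.1 hev
  have hmaps : ∀ s ∈ Set.Ioo 0 ε, ∃ z ∈ insert 0 (kleinLift '' P.verts),
      kleinLift q + s • u ∈ Submodule.span ℝ {z, x} := by
    intro s hs
    obtain ⟨h1, h2, h3⟩ := @hball s (by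
      rw [Real.dist_eq, sub_zero, abs_of_pos hs.1]
      exact hs.2)
    obtain ⟨t, ht, hnull, hz0⟩ := exists_exit hxL h2 h3
    set z := kleinLift q + s • u + t • x with hz
    have hy : kleinLift q + s • u = z - t • x := by rw [hz, add_sub_cancel_right]
    rcases hz0.eq_or_lt with h0 | hpos
    · refine ⟨0, Set.mem_insert _ _, ?_⟩
      rw [hy, eq_zero_of_mink_self_nonpos h0.symm hnull.le]
      exact Submodule.sub_mem _ (Submodule.zero_mem _)
        (Submodule.smul_mem _ _ (Submodule.subset_span (by simp)))
    · have hzc : z ∈ P.linCone := P.add_mem_linCone h1 (P.smul_mem_linCone hx ht)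
      refine ⟨_, Set.mem_insert_of_mem _
        (Set.mem_image_of_mem _ (P.kleinMap_mem_idealVerts hzc hnull hpos).1), ?_⟩
      rw [hy]
      refine Submodule.sub_mem _ ?_ (Submodule.smul_mem _ _ (Submodule.subset_span (by simp)))
      have := Submodule.smul_mem (Submodule.span ℝ {kleinLift (kleinMap z), x}) (z 0)
        (Submodule.subset_span (Set.mem_insert _ _))
      rwa [smul_kleinLift_kleinMap hpos.ne'] at this
  choose! f hfZ hf using hmaps
  obtain ⟨s, hs, s', hs', hne, heq⟩ :=
    (Set.Ioo_infinite hε).exists_ne_map_eq_of_mapsTo (fun s hs => hfZ s hs) hZ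
  refine hu _ (hfZ s hs) ?_
  have h1 := hf s hs
  have h2 := hf s' hs'
  rw [← heq] at h2
  have h3 := Submodule.sub_mem _ h1 h2
  rw [add_sub_add_left_eq_sub, ← sub_smul] at h3
  exact (Submodule.smul_mem_iff _ (sub_ne_zero.2 hne)).1 h3

end HypPolyhedron

namespace HypPolyhedron

variable {n : ℕ} (P : HypPolyhedron n)

lemma mink_of_spatial (e : Fin (n + 1) → ℝ) (d : EuclideanSpace ℝ (Fin n)) :
    mink e (Fin.cons 0 fun i => d i) = inner ℝ (spatial e) d := by
  rw [mink_eq_inner, Fin.cons_zero, mul_zero, sub_zero]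
  rfl

/-- The points of the polyhedron lying on two given walls. -/
def ridge (i j : Fin P.m) : Set (EuclideanSpace ℝ (Fin n)) :=
  {p | p ∈ P.cl ∧ mink (P.e i) (kleinLift p) = 0 ∧ mink (P.e j) (kleinLift p) = 0}

lemma isExposed_ridge (i j : Fin P.m) : IsExposed ℝ P.cl (P.ridge i j) := by
  rintro ⟨p, hp, hpi, hpj⟩
  refine ⟨innerSL ℝ (spatial (P.e i) + spatial (P.e j)), ?_⟩
  rw [mink_kleinLift] at hpi hpj
  ext x
  simp only [ridge, Set.mem_ofPred_eq, innerSL_apply_apply, inner_add_left, mink_kleinLift]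
  constructor
  · rintro ⟨hx, hxi, hxj⟩
    refine ⟨hx, fun y hy => ?_⟩
    have h1 := (P.mem_cl.1 hy).2 i
    have h2 := (P.mem_cl.1 hy).2 j
    rw [mink_kleinLift] at h1 h2
    linarith
  · rintro ⟨hx, hmax⟩
    have h0 := hmax p hp
    have h1 := (P.mem_cl.1 hx).2 i
    have h2 := (P.mem_cl.1 hx).2 j
    rw [mink_kleinLift] at h1 h2
    exact ⟨hx, by linarith, by linarith⟩

lemma faceInHyperplane_ridge (i j : Fin P.m) :
    P.faceInHyperplane (P.e i) (P.ridge i j) ∧ P.faceInHyperplane (P.e j) (P.ridge i j) :=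
  ⟨fun _ hx hxF => (mink_eq_zero_iff_kleinLift hx.1.2).1 hxF.2.1,
    fun _ hx hxF => (mink_eq_zero_iff_kleinLift hx.1.2).1 hxF.2.2⟩

lemma linearIndependent_spatial {i j : Fin P.m} {p : EuclideanSpace ℝ (Fin n)}
    (hpi : mink (P.e i) (kleinLift p) = 0) (hpj : mink (P.e j) (kleinLift p) = 0)
    {x : Fin (n + 1) → ℝ} (hxj : mink (P.e j) x = 0) (hxi : mink (P.e i) x < 0) :
    LinearIndependent ℝ ![spatial (P.e i), spatial (P.e j)] := by
  rw [LinearIndependent.pair_iff]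
  intro s t hst
  rw [mink_kleinLift, sub_eq_zero] at hpi hpj
  have h0 : s * P.e i 0 + t * P.e j 0 = 0 := by
    rw [← hpi, ← hpj, ← real_inner_smul_left, ← real_inner_smul_left, ← inner_add_left, hst,
      inner_zero_left]
  have hs : s = 0 := by
    have h1 : s * mink (P.e i) x + t * mink (P.e j) x = 0 := by
      rw [mink_eq_inner, mink_eq_inner]
      have : s * inner ℝ (spatial (P.e i)) (spatial x) + t * inner ℝ (spatial (P.e j)) (spatial x)
          = 0 := by
        rw [← real_inner_smul_left, ← real_inner_smul_left, ← inner_add_left, hst, inner_zero_left]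
      linear_combination this - x 0 * h0
    rw [hxj, mul_zero, add_zero] at h1
    exact (mul_eq_zero.1 h1).resolve_right hxi.ne
  refine ⟨hs, ?_⟩
  rw [hs, zero_smul, zero_add] at hst
  exact (smul_eq_zero.1 hst).resolve_right (P.spatial_ne_zero j)

variable {P}

lemma exists_add_smul_mem {i j : Fin P.m} {T : Finset (Fin P.m)}
    (hT : ∀ x, mink (P.e i) x = 0 → mink (P.e j) x = 0 → (∀ k ∈ T, mink (P.e k) x ≤ 0) →
      x ∈ P.linCone)
    {z : Fin (n + 1) → ℝ} (hzi : mink (P.e i) z = 0) (hzj : mink (P.e j) z = 0)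
    (hzT : ∀ k ∈ T, mink (P.e k) z < 0) {w : Fin (n + 1) → ℝ} (hwi : mink (P.e i) w = 0)
    (hwj : mink (P.e j) w = 0) : ∃ ε > (0 : ℝ), z + ε • w ∈ P.linCone := by
  obtain ⟨ε, hε, h⟩ := exists_pos_perturbation (fun k => mink (P.e k) z) fun k => mink (P.e k) w
  refine ⟨ε, hε, hT _ ?_ ?_ fun k hk => ?_⟩
  · rw [mink_add_right, mink_smul_right, hzi, hwi, mul_zero, add_zero]
  · rw [mink_add_right, mink_smul_right, hzj, hwj, mul_zero, add_zero]
  · rw [mink_add_right, mink_smul_right]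
    exact (h k (hzT k hk)).1.le

lemma pos_of_ridge (hn : 2 ≤ n) (hfin : P.verts.Finite) {i j : Fin P.m}
    {z : Fin (n + 1) → ℝ} (hz : z ∈ P.linCone)
    (hloc : ∀ w, mink (P.e i) w = 0 → mink (P.e j) w = 0 → ∃ ε > (0 : ℝ), z + ε • w ∈ P.linCone) :
    0 < z 0 := by
  obtain ⟨h1, h2⟩ := P.causal hn hfin hz
  refine lt_of_le_of_ne h2 fun h0 => ?_
  have hz0 : z = 0 := eq_zero_of_mink_self_nonpos h0.symm h1
  obtain ⟨w, hw, hw0⟩ := Submodule.exists_mem_ne_zero_of_ne_bot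
    (LinearMap.ker_ne_bot_of_finrank_lt (f := (minkLin (P.e i)).prod (minkLin (P.e j)))
      (by rw [Module.finrank_prod, Module.finrank_self, Module.finrank_fin_fun]; omega))
  replace hw : mink (P.e i) w = 0 ∧ mink (P.e j) w = 0 := by
    simpa [LinearMap.mem_ker, Prod.ext_iff] using hw
  have key : ∀ w, mink (P.e i) w = 0 → mink (P.e j) w = 0 → mink w w ≤ 0 ∧ 0 ≤ w 0 := by
    intro w hwi hwj
    obtain ⟨ε, hε, h⟩ := hloc w hwi hwj
    rw [hz0, zero_add] at h
    have := P.smul_mem_linCone h (inv_pos.2 hε).le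
    rw [smul_smul, inv_mul_cancel₀ hε.ne', one_smul] at this
    exact P.causal hn hfin this
  obtain ⟨h3, h4⟩ := key w hw.1 hw.2
  obtain ⟨-, h5⟩ := key ((-1 : ℝ) • w) (by rw [mink_smul_right, hw.1, mul_zero])
    (by rw [mink_smul_right, hw.2, mul_zero])
  refine hw0 (eq_zero_of_mink_self_nonpos (le_antisymm ?_ h4) h3)
  simpa using h5

lemma sdim_ridge (hn : 2 ≤ n) (hfin : P.verts.Finite) {i j : Fin P.m}
    {z : Fin (n + 1) → ℝ} (hz : z ∈ P.linCone) (hz0 : 0 < z 0) (hzi : mink (P.e i) z = 0)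
    (hzj : mink (P.e j) z = 0)
    (hloc : ∀ w, mink (P.e i) w = 0 → mink (P.e j) w = 0 → ∃ ε > (0 : ℝ), z + ε • w ∈ P.linCone)
    {x : Fin (n + 1) → ℝ} (hxj : mink (P.e j) x = 0) (hxi : mink (P.e i) x < 0) :
    kleinMap z ∈ P.ridge i j ∧ sdim (P.ridge i j) = n - 2 := by
  have hmem : ∀ y, y ∈ P.linCone → 0 < y 0 → mink (P.e i) y = 0 → mink (P.e j) y = 0 →
      kleinMap y ∈ P.ridge i j := fun y hy hy0 hyi hyj =>
    ⟨P.kleinMap_mem_cl hy (P.causal hn hfin hy).1 hy0, (mink_eq_zero_iff_kleinLift hy0).2 hyi,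
      (mink_eq_zero_iff_kleinLift hy0).2 hyj⟩
  have hzF := hmem z hz hz0 hzi hzj
  refine ⟨hzF, ?_⟩
  set U := Submodule.span ℝ (Set.range ![spatial (P.e i), spatial (P.e j)]) with hU
  have hUm : ∀ d, d ∈ Uᗮ ↔ inner ℝ (spatial (P.e i)) d = 0 ∧ inner ℝ (spatial (P.e j)) d = 0 := by
    intro d
    rw [hU, Submodule.mem_orthogonal]
    constructor
    · intro h
      exact ⟨h _ (Submodule.subset_span ⟨0, rfl⟩), h _ (Submodule.subset_span ⟨1, rfl⟩)⟩
    · rintro ⟨h1, h2⟩ u hu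
      induction hu using Submodule.span_induction with
      | mem u hu =>
        obtain ⟨k, rfl⟩ := hu
        fin_cases k
        · exact h1
        · exact h2
      | zero => exact inner_zero_left _
      | add a b _ _ ha hb => rw [inner_add_left, ha, hb, add_zero]
      | smul c a _ ha => rw [real_inner_smul_left, ha, mul_zero]
  have hspan : vectorSpan ℝ (P.ridge i j) = Uᗮ := by
    apply le_antisymm
    · rw [vectorSpan, Submodule.span_le]
      rintro d ⟨p, hp, q, hq, rfl⟩
      obtain ⟨-, h1, h2⟩ := hp
      obtain ⟨-, h3, h4⟩ := hq
      rw [mink_kleinLift] at h1 h2 h3 h4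
      change p - q ∈ Uᗮ
      rw [hUm, inner_sub_right, inner_sub_right]
      exact ⟨by linarith, by linarith⟩
    · intro d hd
      rw [hUm] at hd
      obtain ⟨ε, hε, h⟩ := hloc (Fin.cons 0 fun i => d i) (by rw [mink_of_spatial, hd.1])
        (by rw [mink_of_spatial, hd.2])
      set y := z + ε • (Fin.cons 0 fun i => d i : Fin (n + 1) → ℝ) with hy
      have hy0 : y 0 = z 0 := by simp [hy]
      have hyF := hmem y h (hy0 ▸ hz0)
        (by rw [hy, mink_add_right, mink_smul_right, mink_of_spatial, hzi, hd.1]; simp)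
        (by rw [hy, mink_add_right, mink_smul_right, mink_of_spatial, hzj, hd.2]; simp)
      have hsub := vsub_mem_vectorSpan ℝ hyF hzF
      have heq : kleinMap y -ᵥ kleinMap z = (ε / z 0) • d := by
        ext k
        simp only [vsub_eq_sub, PiLp.sub_apply, PiLp.smul_apply, smul_eq_mul, kleinMap, hy0]
        simp only [hy, Pi.add_apply, Pi.smul_apply, Fin.cons_succ, smul_eq_mul]
        field_simp
        ring
      rw [heq] at hsub
      exact (Submodule.smul_mem_iff _ (div_pos hε hz0).ne').1 hsub
  have hfr := Submodule.finrank_add_finrank_orthogonal U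
  rw [hU, finrank_span_eq_card
    (P.linearIndependent_spatial hzF.2.1 hzF.2.2 hxj hxi), ← hU, Fintype.card_fin,
    finrank_euclideanSpace_fin] at hfr
  rw [sdim, hspan]
  omega

lemma mink_eq_zero_of_ridge (hn : 2 ≤ n) (hfin : P.verts.Finite) (hra : P.IsRightAngled)
    {i j : Fin P.m} {T : Finset (Fin P.m)}
    (hT : ∀ x, mink (P.e i) x = 0 → mink (P.e j) x = 0 → (∀ k ∈ T, mink (P.e k) x ≤ 0) →
      x ∈ P.linCone)
    {z : Fin (n + 1) → ℝ} (hzi : mink (P.e i) z = 0) (hzj : mink (P.e j) z = 0)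
    (hzT : ∀ k ∈ T, mink (P.e k) z < 0) {x : Fin (n + 1) → ℝ} (hxj : mink (P.e j) x = 0)
    (hxi : mink (P.e i) x < 0) : mink (P.e i) (P.e j) = 0 := by
  have hij : i ≠ j := by
    rintro rfl
    exact hxi.ne hxj
  have hloc : ∀ w, mink (P.e i) w = 0 → mink (P.e j) w = 0 → ∃ ε > (0 : ℝ), z + ε • w ∈ P.linCone :=
    fun w hwi hwj => exists_add_smul_mem hT hzi hzj hzT hwi hwj
  have hz : z ∈ P.linCone := hT z hzi hzj fun k hk => (hzT k hk).le
  have hz0 := pos_of_ridge hn hfin hz hloc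
  obtain ⟨h1, h2⟩ := sdim_ridge hn hfin hz hz0 hzi hzj hloc hxj hxi
  exact hra i j hij ⟨P.ridge i j, ⟨P.isExposed_ridge i j, ⟨_, h1⟩, h2⟩,
    P.faceInHyperplane_ridge i j⟩

/-- An irredundant subsystem of the walls of a right-angled polyhedron has pairwise products `0`
or at most `-1`. -/
lemma exists_irredundant_walls (hn : 2 ≤ n) (hfin : P.verts.Finite) (hra : P.IsRightAngled) :
    ∃ A : Finset (Fin P.m), (∀ x, (∀ i ∈ A, mink (P.e i) x ≤ 0) → x ∈ P.linCone) ∧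
      ∀ i ∈ A, ∀ j ∈ A, i ≠ j → mink (P.e i) (P.e j) = 0 ∨ mink (P.e i) (P.e j) ≤ -1 := by
  classical
  obtain ⟨q, -, hq⟩ := P.exists_interior_point
  obtain ⟨A, -, hA, hirr⟩ := exists_irredundant (fun i => minkLin (P.e i)) ⊤ Finset.univ
    (p := kleinLift q) trivial fun i _ => by simpa using hq i
  simp only [minkLin_apply, Submodule.mem_top, true_implies, Finset.mem_univ, true_and] at hA hirr
  have hAcone : ∀ x, (∀ i ∈ A, mink (P.e i) x ≤ 0) → x ∈ P.linCone := hA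
  refine ⟨A, hAcone, ?_⟩
  have hproj : ∀ i ∈ A, ∀ x ∈ P.linCone, x - mink (P.e i) x • P.e i ∈ P.linCone := by
    intro i hi x hx
    obtain ⟨y, hyi, hy⟩ := hirr i hi
    obtain ⟨J, hJA, hJ, hJirr⟩ := exists_irredundant (fun k => minkLin (P.e k))
      (LinearMap.ker (minkLin (P.e i))) (A.erase i) (p := y) (by simpa using hyi) fun k hk => by
        simpa using hy k (Finset.mem_of_mem_erase hk) (Finset.ne_of_mem_erase hk)
    simp only [minkLin_apply, LinearMap.mem_ker] at hJ hJirr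
    have hJcone : ∀ x, mink (P.e i) x = 0 → (∀ k ∈ J, mink (P.e k) x ≤ 0) → x ∈ P.linCone := by
      intro x hxi hx
      refine hAcone x fun k hk => ?_
      by_cases hki : k = i
      · rw [hki, hxi]
      · exact hJ x hxi hx k (Finset.mem_erase.2 ⟨hki, hk⟩)
    have horth : ∀ k ∈ J, mink (P.e i) (P.e k) = 0 := by
      intro k hk
      have hkA := Finset.mem_erase.1 (hJA hk)
      obtain ⟨z, hzi, hzk, hz⟩ := hJirr k hk
      obtain ⟨u, huk, hu⟩ := hirr k hkA.2
      refine mink_eq_zero_of_ridge hn hfin hra (T := J.erase k) (fun x hxi hxk hx => ?_) hzi hzk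
        (fun l hl => hz l (Finset.mem_of_mem_erase hl) (Finset.ne_of_mem_erase hl)) huk
        (hu i hi hkA.1.symm)
      refine hJcone x hxi fun l hl => ?_
      by_cases hlk : l = k
      · rw [hlk, hxk]
      · exact hx l (Finset.mem_erase.2 ⟨hlk, hl⟩)
    refine hJcone _ ?_ fun k hk => ?_
    · rw [mink_sub_right, mink_smul_right, P.unit, mul_one, sub_self]
    · rw [mink_sub_right, mink_smul_right, mink_comm (P.e k) (P.e i), horth k hk, mul_zero,
        sub_zero]
      exact hx k
  have hnonpos : ∀ i ∈ A, ∀ j ∈ A, i ≠ j → mink (P.e i) (P.e j) ≤ 0 := by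
    intro i hi j hj hij
    obtain ⟨x, hxj, hx⟩ := hirr j hj
    have hxi := hx i hi hij
    have hxc : x ∈ P.linCone := hAcone x fun k hk => by
      by_cases hkj : k = j
      · rw [hkj, hxj]
      · exact (hx k hk hkj).le
    have h := hproj i hi x hxc j
    rw [mink_sub_right, mink_smul_right, hxj, mink_comm (P.e j)] at h
    nlinarith
  intro i hi j hj hij
  by_contra! hcon
  set g := mink (P.e i) (P.e j) with hg
  have hg0 : g < 0 := lt_of_le_of_ne (hnonpos i hi j hj hij) hcon.1
  have hgji : mink (P.e j) (P.e i) = g := by rw [hg, mink_comm]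
  have hD : 0 < 1 - g ^ 2 := by nlinarith [hcon.2]
  obtain ⟨x, hxj, hx⟩ := hirr j hj
  set r := mink (P.e i) (kleinLift q) with hr
  set s := mink (P.e j) (kleinLift q) with hs
  have hr0 : r < 0 := hq i
  have hs0 : s < 0 := hq j
  set a := (r - g * s) / (1 - g ^ 2) with ha
  set b := (s - g * r) / (1 - g ^ 2) with hb
  have ha0 : a < 0 := div_neg_of_neg_of_pos (by nlinarith [mul_pos_of_neg_of_neg hg0 hs0]) hD
  have hb0 : b < 0 := div_neg_of_neg_of_pos (by nlinarith [mul_pos_of_neg_of_neg hg0 hr0]) hD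
  refine hcon.1 (mink_eq_zero_of_ridge hn hfin hra (T := (A.erase i).erase j)
    (z := kleinLift q - a • P.e i - b • P.e j) (fun y hyi hyj hy => hAcone y fun k hk => ?_) ?_ ?_
    (fun k hk => ?_) hxj (hx i hi hij))
  · by_cases hki : k = i
    · rw [hki, hyi]
    · by_cases hkj : k = j
      · rw [hkj, hyj]
      · exact hy k (Finset.mem_erase.2 ⟨hkj, Finset.mem_erase.2 ⟨hki, hk⟩⟩)
  · rw [mink_sub_right, mink_sub_right, mink_smul_right, mink_smul_right, P.unit, ← hr, ← hg, ha,
      hb]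
    field_simp
    ring
  · rw [mink_sub_right, mink_sub_right, mink_smul_right, mink_smul_right, P.unit, ← hs, hgji, ha,
      hb]
    field_simp
    ring
  · rw [Finset.mem_erase, Finset.mem_erase] at hk
    rw [mink_sub_right, mink_sub_right, mink_smul_right, mink_smul_right]
    nlinarith [hq k, mul_nonneg_of_nonpos_of_nonpos ha0.le (hnonpos k hk.2.2 i hi hk.2.1),
      mul_nonneg_of_nonpos_of_nonpos hb0.le (hnonpos k hk.2.2 j hj hk.1)]

end HypPolyhedron

/-- For `5 ≤ n ≤ 12`, every finite-volume non-compact right-angled convex hyperbolic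
`n`-polyhedron has at least `vₙ` ideal vertices. -/
theorem ideal_vertices_lower_bound (n : ℕ) (hn : 5 ≤ n) (hn' : n ≤ 12)
    (P : HypPolyhedron n) (hfv : P.FiniteVolume) (hra : P.IsRightAngled)
    (hnc : ¬ P.IsCompactPoly) :
    idealVertexBound n ≤ P.vInf := by
  classical
  obtain ⟨A, hA, hgram⟩ := HypPolyhedron.exists_irredundant_walls (by omega) hfv.1 hra
  obtain ⟨q, hq1, hq⟩ := P.exists_interior_point
  let D : RightAngledCone n {i // i ∈ A} :=
    { e := fun i => P.e i
      unit := fun i => P.unit i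
      gram := fun i j hij => hgram i i.2 j j.2 fun h => hij (Subtype.ext h)
      pt := kleinLift q
      pt_timelike := by
        rw [mink_kleinLift_self]
        nlinarith [norm_nonneg q]
      pt_neg := fun i => hq i
      causal := fun x hx => P.causal (by omega) hfv.1 (hA x fun i hi => hx ⟨i, hi⟩) }
  refine (RightAngledCone.idealVertexBound_le (D := D) hn hn').trans ?_
  rw [HypPolyhedron.vInf, ← Set.ncard_coe_finset]
  refine Set.ncard_le_ncard_of_injOn kleinMap (fun v hv => ?_) (fun v hv w hw h => ?_)
    (hfv.1.subset fun v hv => hv.1)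
  · rw [Finset.mem_coe, D.mem_idealOn] at hv
    have hvc : v ∈ P.linCone := hA v fun i hi => D.mem_cone_of_verts hv.1.1 ⟨i, hi⟩
    refine P.kleinMap_mem_idealVerts hvc hv.2 ?_
    rw [D.apply_zero_of_verts hv.1.1]
    exact one_pos
  · rw [Finset.mem_coe, D.mem_idealOn] at hv hw
    have hv1 := D.apply_zero_of_verts hv.1.1
    have hw1 := D.apply_zero_of_verts hw.1.1
    rw [← smul_kleinLift_kleinMap (x := v) (by rw [hv1]; exact one_ne_zero),
      ← smul_kleinLift_kleinMap (x := w) (by rw [hw1]; exact one_ne_zero), h, hv1, hw1]
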